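/- arXiv:0809.2427 — 14 statements merged into one kernel-verified Lean document; each statement's English description precedes it below -/
import Mathlib

section
/- Let V be a finite-dimensional complex inner product space and let K ⊆ V be a nonzero finitely generated ℤ[ω]-submodule such that: (i) ⟨x,y⟩ ∈ θℤ[ω] for all x,y ∈ K; (ii) K is generated as a ℤ[ω]-module by its vectors of norm 3; (iii) K is indecomposable, i.e. K is not the sum of two nonzero mutually orthogonal ℤ[ω]-submodules. Then there exist k ∈ {1,2,3,4} and vectors x_1,…,x_k generating K as a ℤ[ω]-module with ⟨x_i,x_i⟩ = 3 for all i, ⟨x_i,x_{i+1}⟩ = −p for 1 ≤ i ≤ k−1, and ⟨x_i,x_j⟩ = 0 whenever j > i+1. (Equivalently, K is isometric to one of the four Eisenstein root lattices E_2^ℰ = A_2, E_4^ℰ = D_4, E_6^ℰ = E_6, E_8^ℰ = E_8.) -/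
/- Classification of indecomposable Eisenstein root lattices:
   any such is spanned by a chain x_1, …, x_k (k ≤ 4) forming the linear
   diagram of A₂ᵉ, D₄ᵉ, E₆ᵉ or E₈ᵉ. -/

open scoped ComplexInnerProductSpace

set_option synthInstance.maxHeartbeats 1000000
set_option maxHeartbeats 1000000

/-- `ω = e^{2πi/3}`. -/
noncomputable def ω : ℂ := Complex.exp (2 * Real.pi * Complex.I / 3)

/-- `θ = ω - ω̄`. -/
noncomputable def θ : ℂ := ω - starRingEnd ℂ ω

/-- `p = 1 - ω̄`. -/
noncomputable def p : ℂ := 1 - starRingEnd ℂ ω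

/-- The ring of Eisenstein integers `ℤ[ω]`, as a subring of `ℂ`. -/
noncomputable def Eis : Subring ℂ := Subring.closure {ω}

theorem om_sq : ω * ω = -1 - ω := by
  have hpr : IsPrimitiveRoot ω 3 := by
    have := Complex.isPrimitiveRoot_exp 3 (by norm_num)
    simpa [ω] using this
  have h3 : ω ^ 3 = 1 := hpr.pow_eq_one
  have h1 : ω ≠ 1 := hpr.ne_one (by norm_num)
  have : (ω - 1) * (ω * ω + ω + 1) = 0 := by linear_combination h3
  rcases mul_eq_zero.1 this with h | h
  · exact absurd (sub_eq_zero.1 h) h1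
  · linear_combination h

theorem om_conj : starRingEnd ℂ ω = -1 - ω := by
  have h : starRingEnd ℂ ω * ω = 1 := by
    rw [← Complex.normSq_eq_conj_mul_self, Complex.normSq_eq_norm_sq]
    have : ‖ω‖ = 1 := by
      have := Complex.norm_exp_ofReal_mul_I (2 * Real.pi / 3)
      rw [← this, ω]
      congr 2
      push_cast
      ring
    simp [this]
  have hne : ω ≠ 0 := by
    intro h0
    simp [h0] at h
  apply mul_right_cancel₀ hne
  rw [h]
  linear_combination om_sq

theorem p_eq : p = 2 + ω := by rw [p, om_conj]; ring

theorem p_conj : starRingEnd ℂ p = 1 - ω := by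
  rw [p_eq, map_add, om_conj, map_ofNat]; ring

theorem th_eq : θ = p * (1 + ω) := by
  rw [p_eq, θ, om_conj]; linear_combination -om_sq

theorem p_ne : p ≠ 0 := by
  intro h
  have h2 := p_conj
  rw [h, map_zero] at h2
  have h3 := p_eq
  rw [h] at h3
  have : (3 : ℂ) = 0 := by linear_combination -h3 - h2
  norm_num at this

theorem om_mem : ω ∈ Eis := Subring.subset_closure rfl

theorem p_mem : p ∈ Eis := by
  rw [p_eq]; exact add_mem (by exact_mod_cast natCast_mem Eis 2) om_mem

theorem mem_Eis {z : ℂ} (hz : z ∈ Eis) : ∃ m n : ℤ, z = m + n * ω := by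
  induction hz using Subring.closure_induction with
  | mem x hx => exact ⟨0, 1, by simp [Set.mem_singleton_iff.1 hx]⟩
  | zero => exact ⟨0, 0, by simp⟩
  | one => exact ⟨1, 0, by simp⟩
  | add x y _ _ hx hy =>
    obtain ⟨m, n, rfl⟩ := hx
    obtain ⟨k, l, rfl⟩ := hy
    exact ⟨m + k, n + l, by push_cast; ring⟩
  | neg x _ hx =>
    obtain ⟨m, n, rfl⟩ := hx
    exact ⟨-m, -n, by push_cast; ring⟩
  | mul x y _ _ hx hy =>
    obtain ⟨m, n, rfl⟩ := hx
    obtain ⟨k, l, rfl⟩ := hy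
    exact ⟨m * k - n * l, m * l + n * k - n * l, by
      push_cast; linear_combination (n * l : ℂ) * om_sq⟩

theorem mk_Eis (m n : ℤ) : (m + n * ω : ℂ) ∈ Eis :=
  add_mem (intCast_mem _ _) (mul_mem (intCast_mem _ _) om_mem)

theorem conj_mk (m n : ℤ) : starRingEnd ℂ (m + n * ω) = (m - n : ℤ) + (-n : ℤ) * ω := by
  rw [map_add, map_mul, om_conj, map_intCast, map_intCast]; push_cast; ring

theorem conj_mem {z : ℂ} (hz : z ∈ Eis) : starRingEnd ℂ z ∈ Eis := by
  obtain ⟨m, n, rfl⟩ := mem_Eis hz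
  rw [conj_mk]; exact mk_Eis _ _

theorem nrm_mk (m n : ℤ) : (m + n * ω : ℂ) * starRingEnd ℂ (m + n * ω)
    = ((m * m - m * n + n * n : ℤ) : ℂ) := by
  rw [conj_mk]; push_cast; linear_combination (-(n : ℂ) * n) * om_sq

/-- the six units -/
theorem unit_cases {z : ℂ} (hz : z ∈ Eis) (h : z * starRingEnd ℂ z = 1) :
    z = 1 ∨ z = -1 ∨ z = ω ∨ z = -ω ∨ z = 1 + ω ∨ z = -1 - ω := by
  obtain ⟨m, n, rfl⟩ := mem_Eis hz
  rw [nrm_mk] at h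
  have h' : m * m - m * n + n * n = 1 := by exact_mod_cast h
  have h1 : m ≤ 1 := by nlinarith [sq_nonneg (m - 2 * n)]
  have h2 : -1 ≤ m := by nlinarith [sq_nonneg (m - 2 * n)]
  have h3 : n ≤ 1 := by nlinarith [sq_nonneg (n - 2 * m)]
  have h4 : -1 ≤ n := by nlinarith [sq_nonneg (n - 2 * m)]
  interval_cases m <;> interval_cases n <;> simp at h' ⊢
  all_goals ring_nf
  all_goals simp

/-- small elements are zero, units, or divisible by `p` with unit quotient -/
theorem small_cases {z : ℂ} (hz : z ∈ Eis) (h : ‖z‖ ^ 2 ≤ 3) :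
    z = 0 ∨ z * starRingEnd ℂ z = 1 ∨
      (∃ u ∈ Eis, 3 * u = p * z ∧ z * starRingEnd ℂ z = 3) := by
  obtain ⟨m, n, rfl⟩ := mem_Eis hz
  have h0 := nrm_mk m n
  have h5 : m * m - m * n + n * n ≤ 3 := by
    rw [Complex.mul_conj, Complex.normSq_eq_norm_sq] at h0
    have : ‖(m + n * ω : ℂ)‖ ^ 2 = ((m * m - m * n + n * n : ℤ) : ℝ) := by exact_mod_cast h0
    rw [this] at h
    exact_mod_cast h
  have h1 : m ≤ 2 := by nlinarith [sq_nonneg (m - 2 * n)]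
  have h2 : -2 ≤ m := by nlinarith [sq_nonneg (m - 2 * n)]
  have h3 : n ≤ 2 := by nlinarith [sq_nonneg (n - 2 * m)]
  have h4 : -2 ≤ n := by nlinarith [sq_nonneg (n - 2 * m)]
  have key : m * m - m * n + n * n = 3 → ∃ a b : ℤ, 2 * m - n = 3 * a ∧ m + n = 3 * b := by
    intro hh
    have h6 : (m + n) * (m + n) = 3 * (1 + m * n) := by linarith
    have h7 : (3 : ℤ) ∣ m + n := by
      have : (3 : ℤ) ∣ (m + n) * (m + n) := ⟨_, h6⟩
      rcases Int.prime_three.dvd_or_dvd this with h | h <;> exact h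
    obtain ⟨b, hb⟩ := h7
    exact ⟨m - b, b, by linarith, hb⟩
  have h6 : 0 ≤ m * m - m * n + n * n := by nlinarith [sq_nonneg (m - 2 * n), sq_nonneg m]
  rw [h0]
  have hc : m * m - m * n + n * n = 0 ∨ m * m - m * n + n * n = 1 ∨
      m * m - m * n + n * n = 2 ∨ m * m - m * n + n * n = 3 := by omega
  rcases hc with hc | hc | hc | hc
  · left
    rw [hc] at h0
    have : (m + n * ω : ℂ) * starRingEnd ℂ (m + n * ω) = 0 := by simpa using h0
    rcases mul_eq_zero.1 this with h | h
    · exact h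
    · exact (map_eq_zero _).1 h
  · right; left; rw [hc]; simp
  · exfalso
    interval_cases m <;> interval_cases n <;> simp at hc
  · right; right
    obtain ⟨a, b, ha, hb⟩ := key hc
    refine ⟨_, mk_Eis a b, ?_, by rw [hc]; simp⟩
    have ha' : (2 * m - n : ℂ) = 3 * a := by exact_mod_cast ha
    have hb' : (m + n : ℂ) = 3 * b := by exact_mod_cast hb
    rw [p_eq]
    linear_combination -ha' - ω * hb' - n * om_sq

theorem q_lemma {q : ℂ} (hq : q ∈ Eis) (h : q * starRingEnd ℂ q = 1)
    (h1 : q - 1 = 0 ∨ (q - 1) * starRingEnd ℂ (q - 1) = 1)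
    (h2 : q - 1 - ω = 0 ∨ (q - 1 - ω) * starRingEnd ℂ (q - 1 - ω) = 1) :
    q - 1 = 0 ∨ q - 1 - ω = 0 := by
  by_contra hcon
  push Not at hcon
  have h1 := h1.resolve_left hcon.1
  have h2 := h2.resolve_left hcon.2
  obtain ⟨m, n, rfl⟩ := mem_Eis hq
  have e1 : (m + n * ω - 1 : ℂ) = ((m - 1 : ℤ) : ℂ) + n * ω := by push_cast; ring
  have e2 : (m + n * ω - 1 - ω : ℂ) = ((m - 1 : ℤ) : ℂ) + (n - 1 : ℤ) * ω := by push_cast; ring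
  rw [e1, nrm_mk] at h1
  rw [e2, nrm_mk] at h2
  rw [nrm_mk] at h
  have h : m * m - m * n + n * n = 1 := by exact_mod_cast h
  have h1 : (m - 1) * (m - 1) - (m - 1) * n + n * n = 1 := by exact_mod_cast h1
  have h2 : (m - 1) * (m - 1) - (m - 1) * (n - 1) + (n - 1) * (n - 1) = 1 := by exact_mod_cast h2
  have a1 : n = 2 * m - 1 := by linarith
  subst a1
  ring_nf at h h2
  have : m = 0 ∨ m = 1 := by
    have : m * (m - 1) = 0 := by nlinarith
    rcases mul_eq_zero.1 this with h | h <;> omega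
  rcases this with rfl | rfl <;> norm_num at h2

section lat
variable {V : Type*} [NormedAddCommGroup V] [InnerProductSpace ℂ V]

theorem smul_mem_E (L : Submodule Eis V) {c : ℂ} (hc : c ∈ Eis) {v : V} (hv : v ∈ L) :
    c • v ∈ L := L.smul_mem (⟨c, hc⟩ : Eis) hv

theorem inn_swap (x y : V) : ⟪x, y⟫ = starRingEnd ℂ ⟪y, x⟫ := (inner_conj_symm x y).symm

/-- Integrality -/
def Int' (K : Submodule Eis V) : Prop := ∀ x ∈ K, ∀ y ∈ K, ∃ a ∈ Eis, ⟪x, y⟫ = θ * a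

theorem pair {K L : Submodule Eis V} (hK : Int' K) {x r : V}
    (hx : x ∈ K) (hxL : x ∈ L) (hx3 : ⟪x, x⟫ = 3) (hr : r ∈ K) (hr3 : ⟪r, r⟫ = 3) (hrL : r ∉ L) :
    ∃ w ∈ Eis, ⟪x, r⟫ = p * w ∧ (w = 0 ∨ w * starRingEnd ℂ w = 1) := by
  obtain ⟨a, ha, hxr⟩ := hK x hx r hr
  set w := (1 + ω) * a with hw
  have hwE : w ∈ Eis := mul_mem (add_mem (one_mem _) om_mem) ha
  have hxr' : ⟪x, r⟫ = p * w := by rw [hxr, th_eq, hw]; ring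
  refine ⟨w, hwE, hxr', ?_⟩
  have hpp : p * starRingEnd ℂ p = 3 := by rw [p_conj, p_eq]; linear_combination -om_sq
  have hn : ∀ z : V, ⟪z, z⟫ = 3 → ‖z‖ ^ 2 = 3 := by
    intro z hz
    have h2 := inner_self_eq_norm_sq (𝕜 := ℂ) z
    rw [hz] at h2
    simpa using h2.symm
  have hp2 : ‖p‖ ^ 2 = 3 := by
    rw [Complex.mul_conj, Complex.normSq_eq_norm_sq] at hpp
    exact_mod_cast hpp
  have hle : ‖w‖ ^ 2 ≤ 3 := by
    have h1 := norm_inner_le_norm (𝕜 := ℂ) x r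
    rw [hxr', norm_mul] at h1
    have h2 := mul_self_le_mul_self (by positivity) h1
    have h3 : ‖p‖ ^ 2 * ‖w‖ ^ 2 ≤ ‖x‖ ^ 2 * ‖r‖ ^ 2 := by nlinarith
    rw [hp2, hn x hx3, hn r hr3] at h3
    linarith
  rcases small_cases hwE hle with h | h | ⟨u, hu, hu1, hw3⟩
  · exact Or.inl h
  · exact Or.inr h
  · exfalso
    apply hrL
    have hz : r - u • x = 0 := by
      rw [← inner_self_eq_zero (𝕜 := ℂ)]
      have hrx : ⟪r, x⟫ = starRingEnd ℂ (p * w) := by rw [inn_swap, hxr']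
      simp only [inner_sub_left, inner_sub_right, inner_smul_left, inner_smul_right, hx3, hr3,
        hxr', hrx]
      rw [← hu1]
      have hc := congrArg (starRingEnd ℂ) hu1
      simp only [map_mul, map_ofNat] at hc ⊢
      have : 9 * (u * starRingEnd ℂ u) = 9 := by
        linear_combination (3 * starRingEnd ℂ u) * hu1 + p * w * hc
          + w * starRingEnd ℂ w * hpp + 3 * hw3
      linear_combination (-1/3 : ℂ) * this
    rw [sub_eq_zero.1 hz]
    exact smul_mem_E L hu hxL

theorem nonzero_unit {z w : ℂ} (h : z = p * w) (h' : w = 0 ∨ w * starRingEnd ℂ w = 1)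
    (hz : z ≠ 0) : w * starRingEnd ℂ w = 1 := by
  rcases h' with h0 | h1
  · exact absurd (by rw [h, h0, mul_zero]) hz
  · exact h1

theorem add_out {L : Submodule Eis V} {r y : V} {c : ℂ} (hc : c ∈ Eis) (hy : y ∈ L) (hr : r ∉ L) :
    r + c • y ∉ L := by
  intro h
  exact hr ((Submodule.add_mem_iff_left L (smul_mem_E L hc hy)).1 h)

theorem norm_add {r y : V} {c w : ℂ} (hy : ⟪y, y⟫ = 3) (hr : ⟪r, r⟫ = 3) (hyr : ⟪y, r⟫ = p * w)
    (hw : w * starRingEnd ℂ w = 1) (hc : c = -w ∨ c = -w - ω * w) :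
    ⟪r + c • y, r + c • y⟫ = 3 ∧ ⟪y, r + c • y⟫ ≠ 0 := by
  have hry : ⟪r, y⟫ = starRingEnd ℂ (p * w) := by rw [inn_swap, hyr]
  have hw0 : w ≠ 0 := by rintro rfl; simp at hw
  have o1 : ω - 1 ≠ 0 := by
    intro h
    apply p_ne
    have := p_conj
    rw [show 1 - ω = 0 by linear_combination -h] at this
    simpa using this
  have o2 : 1 + 2 * ω ≠ 0 := by
    intro h
    have := om_sq
    rw [show ω = -1/2 by linear_combination h/2] at this
    norm_num at this
  have ho := om_sq
  simp only [inner_add_left, inner_add_right, inner_smul_left, inner_smul_right, hy, hr, hyr, hry,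
    map_mul, p_conj]
  rcases hc with rfl | rfl
  · refine ⟨?_, ?_⟩
    · simp only [map_neg, p_eq]
      linear_combination (0:ℂ) * hw
    · rw [p_eq]
      have : (2 + ω) * w + -w * 3 = (ω - 1) * w := by ring
      rw [this]
      exact mul_ne_zero o1 hw0
  · refine ⟨?_, ?_⟩
    · simp only [map_neg, map_sub, map_mul, om_conj, p_eq]
      linear_combination (-(w * starRingEnd ℂ w)) * ho
    · rw [p_eq]
      have : (2 + ω) * w + (-w - ω * w) * 3 = -(1 + 2 * ω) * w := by ring
      rw [this]
      exact mul_ne_zero (neg_ne_zero.2 o2) hw0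

theorem lemA {K L : Submodule Eis V} (hK : Int' K) (hLK : L ≤ K) {x y r : V}
    (hxL : x ∈ L) (hx3 : ⟪x, x⟫ = 3) (hyL : y ∈ L) (hy3 : ⟪y, y⟫ = 3) (hxy : ⟪x, y⟫ = -p)
    (hr : r ∈ K) (hr3 : ⟪r, r⟫ = 3) (hrL : r ∉ L) (hxr : ⟪x, r⟫ ≠ 0) (hyr : ⟪y, r⟫ ≠ 0) :
    ∃ c ∈ Eis, ⟪r + c • y, r + c • y⟫ = 3 ∧ ⟪x, r + c • y⟫ = 0 ∧ ⟪y, r + c • y⟫ ≠ 0 := by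
  obtain ⟨w1, hw1, e1, u1⟩ := pair hK (hLK hxL) hxL hx3 hr hr3 hrL
  obtain ⟨w2, hw2, e2, u2⟩ := pair hK (hLK hyL) hyL hy3 hr hr3 hrL
  have u1 := nonzero_unit e1 u1 hxr
  have u2 := nonzero_unit e2 u2 hyr
  have hc1 : -w2 ∈ Eis := neg_mem hw2
  have hc2 : -w2 - ω * w2 ∈ Eis := sub_mem hc1 (mul_mem om_mem hw2)
  have A1 := norm_add hy3 hr3 e2 u2 (Or.inl rfl)
  have A2 := norm_add hy3 hr3 e2 u2 (Or.inr rfl)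
  have key : ∀ c ∈ Eis, ⟪r + c • y, r + c • y⟫ = 3 →
      w1 - c = 0 ∨ (w1 - c) * starRingEnd ℂ (w1 - c) = 1 := by
    intro c hc h3
    obtain ⟨w, hw, e, u⟩ := pair hK (hLK hxL) hxL hx3 (K.add_mem hr (smul_mem_E K hc (hLK hyL))) h3
      (add_out hc hyL hrL)
    have : w1 - c = w := by
      rw [inner_add_right, inner_smul_right, e1, hxy] at e
      apply mul_left_cancel₀ p_ne
      linear_combination e
    rw [this]; exact u
  have k1 := key _ hc1 A1.1
  have k2 := key _ hc2 A2.1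
  set q := -w1 * starRingEnd ℂ w2 with hq
  have hqw : w1 = -q * w2 := by rw [hq]; linear_combination (-w1) * u2
  have hqE : q ∈ Eis := mul_mem (neg_mem hw1) (conj_mem hw2)
  have s1 : w1 - -w2 = -(q - 1) * w2 := by rw [hqw]; ring
  have s2 : w1 - (-w2 - ω * w2) = -(q - 1 - ω) * w2 := by rw [hqw]; ring
  have hw20 : w2 ≠ 0 := by rintro rfl; simp at u2
  have conv : ∀ t : ℂ, (-t * w2 = 0 ∨ (-t * w2) * starRingEnd ℂ (-t * w2) = 1) →
      (t = 0 ∨ t * starRingEnd ℂ t = 1) := by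
    intro t ht
    rcases ht with h | h
    · left; simpa [hw20] using h
    · right
      simp only [map_mul, map_neg] at h
      linear_combination h - t * starRingEnd ℂ t * u2
  rw [s1] at k1
  rw [s2] at k2
  have hqu : q * starRingEnd ℂ q = 1 := by
    rw [hqw] at u1
    simp only [map_mul, map_neg] at u1
    linear_combination u1 - q * starRingEnd ℂ q * u2
  rcases q_lemma hqE hqu (conv _ k1) (conv _ k2) with h | h
  · refine ⟨_, hc1, A1.1, ?_, A1.2⟩
    rw [inner_add_right, inner_smul_right, e1, hxy]
    linear_combination p * s1 - p * w2 * h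
  · refine ⟨_, hc2, A2.1, ?_, A2.2⟩
    rw [inner_add_right, inner_smul_right, e1, hxy]
    linear_combination p * s2 - p * w2 * h

/-- data of a root of `K` outside `L` -/
def Out (K L : Submodule Eis V) (r : V) : Prop := r ∈ K ∧ ⟪r, r⟫ = 3 ∧ r ∉ L

theorem out_add {K L : Submodule Eis V} (hLK : L ≤ K) {r y : V} {c : ℂ} (h : Out K L r)
    (hy : y ∈ L) (hc : c ∈ Eis) (h3 : ⟪r + c • y, r + c • y⟫ = 3) : Out K L (r + c • y) :=
  ⟨K.add_mem h.1 (smul_mem_E K hc (hLK hy)), h3, add_out hc hy h.2.2⟩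

/-- add a multiple of `x` keeping nonzero -/
theorem lemB {K L : Submodule Eis V} (hK : Int' K) (hLK : L ≤ K) {x r : V}
    (hxL : x ∈ L) (hx3 : ⟪x, x⟫ = 3) (h : Out K L r) (hxr : ⟪x, r⟫ ≠ 0) :
    ∃ c ∈ Eis, c ≠ 0 ∧ ⟪r + c • x, r + c • x⟫ = 3 ∧ ⟪x, r + c • x⟫ ≠ 0 := by
  obtain ⟨w, hw, e, u⟩ := pair hK (hLK hxL) hxL hx3 h.1 h.2.1 h.2.2
  have u := nonzero_unit e u hxr
  have A := norm_add hx3 h.2.1 e u (Or.inl rfl)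
  refine ⟨-w, neg_mem hw, ?_, A.1, A.2⟩
  intro h0
  rw [neg_eq_zero.1 h0] at u
  simp at u

theorem lemC {K L : Submodule Eis V} (hK : Int' K) (hLK : L ≤ K) {x y r : V}
    (hxL : x ∈ L) (hx3 : ⟪x, x⟫ = 3) (hyL : y ∈ L) (hy3 : ⟪y, y⟫ = 3) (hxy : ⟪x, y⟫ = -p)
    (h : Out K L r) (hxr : ⟪x, r⟫ ≠ 0 ∨ ⟪y, r⟫ ≠ 0) :
    ∃ r', Out K L r' ∧ ⟪x, r'⟫ = 0 ∧ ⟪y, r'⟫ ≠ 0 := by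
  have hyx : ⟪y, x⟫ ≠ 0 := by
    rw [inn_swap, hxy]; simpa using p_ne
  by_cases h1 : ⟪x, r⟫ = 0
  · exact ⟨r, h, h1, hxr.resolve_left (fun h => h h1)⟩
  by_cases h2 : ⟪y, r⟫ = 0
  · obtain ⟨c, hc, hc0, h3, hx'⟩ := lemB hK hLK hxL hx3 h h1
    have h' := out_add hLK h hxL hc h3
    have hy' : ⟪y, r + c • x⟫ ≠ 0 := by
      rw [inner_add_right, inner_smul_right, h2, zero_add]
      exact mul_ne_zero hc0 hyx
    obtain ⟨d, hd, g3, gx, gy⟩ := lemA hK hLK hxL hx3 hyL hy3 hxy h'.1 h'.2.1 h'.2.2 hx' hy'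
    exact ⟨_, out_add hLK h' hyL hd g3, gx, gy⟩
  · obtain ⟨d, hd, g3, gx, gy⟩ := lemA hK hLK hxL hx3 hyL hy3 hxy h.1 h.2.1 h.2.2 h1 h2
    exact ⟨_, out_add hLK h hyL hd g3, gx, gy⟩

/-- star diagrams are degenerate -/
theorem star {K L : Submodule Eis V} (hK : Int' K) (hLK : L ≤ K) {x y z r : V}
    (hxL : x ∈ L) (hx3 : ⟪x, x⟫ = 3) (hyL : y ∈ L) (hy3 : ⟪y, y⟫ = 3) (hzL : z ∈ L)
    (hz3 : ⟪z, z⟫ = 3) (hxy : ⟪x, y⟫ = -p) (hyz : ⟪y, z⟫ = -p) (hxz : ⟪x, z⟫ = 0)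
    (h : Out K L r) (hxr : ⟪x, r⟫ = 0) (hyr : ⟪y, r⟫ ≠ 0) : ⟪z, r⟫ ≠ 0 := by
  intro hzr
  obtain ⟨w, hw, e, u⟩ := pair hK (hLK hyL) hyL hy3 h.1 h.2.1 h.2.2
  have u := nonzero_unit e u hyr
  have o := om_sq
  have hyx : ⟪y, x⟫ = -(1 - ω) := by rw [inn_swap, hxy, map_neg, p_conj]
  have hzy : ⟪z, y⟫ = -(1 - ω) := by rw [inn_swap, hyz, map_neg, p_conj]
  have hzx : ⟪z, x⟫ = 0 := by rw [inn_swap, hxz, map_zero]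
  have hrx : ⟪r, x⟫ = 0 := by rw [inn_swap, hxr, map_zero]
  have hrz : ⟪r, z⟫ = 0 := by rw [inn_swap, hzr, map_zero]
  have hry : ⟪r, y⟫ = (1 - ω) * starRingEnd ℂ w := by rw [inn_swap, e, map_mul, p_conj]
  set s := r + (-p * w) • y + (-w - ω * w) • x + (-w) • z with hs
  have sx : ⟪x, s⟫ = 0 := by
    simp only [hs, inner_add_right, inner_smul_right, hxr, hxy, hx3, hxz, p_eq]
    linear_combination w * o
  have sy : ⟪y, s⟫ = 0 := by
    simp only [hs, inner_add_right, inner_smul_right, e, hyx, hy3, hyz, p_eq]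
    linear_combination -w * o
  have sz : ⟪z, s⟫ = 0 := by
    simp only [hs, inner_add_right, inner_smul_right, hzr, hzx, hzy, hz3, p_eq]
    linear_combination -w * o
  have sr : ⟪r, s⟫ = 0 := by
    simp only [hs, inner_add_right, inner_smul_right, h.2.1, hrx, hry, hrz, p_eq]
    linear_combination (w * starRingEnd ℂ w) * o - 3 * u
  have s0 : s = 0 := by
    rw [← inner_self_eq_zero (𝕜 := ℂ)]
    nth_rewrite 1 [hs]
    simp only [inner_add_left, inner_smul_left, sx, sy, sz, sr]
    ring
  apply h.2.2
  have : r = (p * w) • y + (w + ω * w) • x + w • z := by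
    rw [hs] at s0
    rw [← sub_eq_zero, ← s0]
    module
  rw [this]
  exact L.add_mem (L.add_mem (smul_mem_E L (mul_mem p_mem hw) hyL)
    (smul_mem_E L (add_mem hw (mul_mem om_mem hw)) hxL)) (smul_mem_E L hw hzL)

theorem lem3 {K L : Submodule Eis V} (hK : Int' K) (hLK : L ≤ K) {x y z r : V}
    (hxL : x ∈ L) (hx3 : ⟪x, x⟫ = 3) (hyL : y ∈ L) (hy3 : ⟪y, y⟫ = 3) (hzL : z ∈ L)
    (hz3 : ⟪z, z⟫ = 3) (hxy : ⟪x, y⟫ = -p) (hyz : ⟪y, z⟫ = -p) (hxz : ⟪x, z⟫ = 0)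
    (h : Out K L r) (hn : ⟪x, r⟫ ≠ 0 ∨ ⟪y, r⟫ ≠ 0 ∨ ⟪z, r⟫ ≠ 0) :
    ∃ r', Out K L r' ∧ ⟪x, r'⟫ = 0 ∧ ⟪y, r'⟫ = 0 ∧ ⟪z, r'⟫ ≠ 0 := by
  by_cases h1 : ⟪x, r⟫ ≠ 0 ∨ ⟪y, r⟫ ≠ 0
  · obtain ⟨s, hs, sx, sy⟩ := lemC hK hLK hxL hx3 hyL hy3 hxy h h1
    have sz := star hK hLK hxL hx3 hyL hy3 hzL hz3 hxy hyz hxz hs sx sy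
    obtain ⟨c, hc, g3, gy, gz⟩ := lemA hK hLK hyL hy3 hzL hz3 hyz hs.1 hs.2.1 hs.2.2 sy sz
    refine ⟨_, out_add hLK hs hzL hc g3, ?_, gy, gz⟩
    rw [inner_add_right, inner_smul_right, sx, hxz]; ring
  · push Not at h1
    exact ⟨r, h, h1.1, h1.2, by tauto⟩

/-- rescale -/
theorem rescale {K L : Submodule Eis V} (hK : Int' K) (hLK : L ≤ K) {x r : V}
    (hxL : x ∈ L) (hx3 : ⟪x, x⟫ = 3) (h : Out K L r) (hxr : ⟪x, r⟫ ≠ 0) :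
    ∃ r', Out K L r' ∧ ⟪x, r'⟫ = -p ∧ ∀ y, ⟪y, r⟫ = 0 → ⟪y, r'⟫ = 0 := by
  obtain ⟨w, hw, e, u⟩ := pair hK (hLK hxL) hxL hx3 h.1 h.2.1 h.2.2
  have u := nonzero_unit e u hxr
  refine ⟨(-starRingEnd ℂ w) • r, ⟨smul_mem_E K (neg_mem (conj_mem hw)) h.1, ?_, ?_⟩, ?_, ?_⟩
  · rw [inner_smul_left, inner_smul_right, h.2.1, map_neg, Complex.conj_conj]
    linear_combination 3 * u
  · intro hL
    apply h.2.2
    have := smul_mem_E L (neg_mem hw) hL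
    rwa [smul_smul, neg_mul_neg, u, one_smul] at this
  · rw [inner_smul_right, e]; linear_combination -p * u
  · intro y hy
    rw [inner_smul_right, hy, mul_zero]

theorem lem4 {K L : Submodule Eis V} (hK : Int' K) (hLK : L ≤ K) {x y z t r : V}
    (hxL : x ∈ L) (hx3 : ⟪x, x⟫ = 3) (hyL : y ∈ L) (hy3 : ⟪y, y⟫ = 3) (hzL : z ∈ L)
    (hz3 : ⟪z, z⟫ = 3) (htL : t ∈ L) (ht3 : ⟪t, t⟫ = 3)
    (hxy : ⟪x, y⟫ = -p) (hyz : ⟪y, z⟫ = -p) (hzt : ⟪z, t⟫ = -p)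
    (hxz : ⟪x, z⟫ = 0) (hxt : ⟪x, t⟫ = 0) (hyt : ⟪y, t⟫ = 0)
    (h : Out K L r) (hn : ⟪x, r⟫ ≠ 0 ∨ ⟪y, r⟫ ≠ 0 ∨ ⟪z, r⟫ ≠ 0 ∨ ⟪t, r⟫ ≠ 0) : False := by
  have : ∃ r', Out K L r' ∧ ⟪x, r'⟫ = 0 ∧ ⟪y, r'⟫ = 0 ∧ ⟪z, r'⟫ = 0 ∧ ⟪t, r'⟫ ≠ 0 := by
    by_cases h1 : ⟪x, r⟫ ≠ 0 ∨ ⟪y, r⟫ ≠ 0 ∨ ⟪z, r⟫ ≠ 0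
    · obtain ⟨s, hs, sx, sy, sz⟩ := lem3 hK hLK hxL hx3 hyL hy3 hzL hz3 hxy hyz hxz h h1
      have st := star hK hLK hyL hy3 hzL hz3 htL ht3 hyz hzt hyt hs sy sz
      obtain ⟨c, hc, g3, gz, gt⟩ := lemA hK hLK hzL hz3 htL ht3 hzt hs.1 hs.2.1 hs.2.2 sz st
      refine ⟨_, out_add hLK hs htL hc g3, ?_, ?_, gz, gt⟩
      · rw [inner_add_right, inner_smul_right, sx, hxt]; ring
      · rw [inner_add_right, inner_smul_right, sy, hyt]; ring
    · push Not at h1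
      exact ⟨r, h, h1.1, h1.2.1, h1.2.2, by tauto⟩
  obtain ⟨r1, h1, x1, y1, z1, t1⟩ := this
  obtain ⟨r, h, tr, hall⟩ := rescale hK hLK htL ht3 h1 t1
  have xr := hall _ x1
  have yr := hall _ y1
  have zr := hall _ z1
  have o := om_sq
  have hyx : ⟪y, x⟫ = -(1 - ω) := by rw [inn_swap, hxy, map_neg, p_conj]
  have hzy : ⟪z, y⟫ = -(1 - ω) := by rw [inn_swap, hyz, map_neg, p_conj]
  have htz : ⟪t, z⟫ = -(1 - ω) := by rw [inn_swap, hzt, map_neg, p_conj]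
  have rt : ⟪r, t⟫ = -(1 - ω) := by rw [inn_swap, tr, map_neg, p_conj]
  have hzx : ⟪z, x⟫ = 0 := by rw [inn_swap, hxz, map_zero]
  have htx : ⟪t, x⟫ = 0 := by rw [inn_swap, hxt, map_zero]
  have hty : ⟪t, y⟫ = 0 := by rw [inn_swap, hyt, map_zero]
  have rx : ⟪r, x⟫ = 0 := by rw [inn_swap, xr, map_zero]
  have ry : ⟪r, y⟫ = 0 := by rw [inn_swap, yr, map_zero]
  have rz : ⟪r, z⟫ = 0 := by rw [inn_swap, zr, map_zero]
  set s := r + p • t + (2 * (1 + ω)) • z + (p * (1 + ω)) • y + ω • x with hs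
  have sx : ⟪x, s⟫ = 0 := by
    simp only [hs, inner_add_right, inner_smul_right, xr, hxy, hx3, hxz, hxt, p_eq]
    linear_combination (-4 - ω) * o
  have sy : ⟪y, s⟫ = 0 := by
    simp only [hs, inner_add_right, inner_smul_right, yr, hyx, hy3, hyz, hyt, p_eq]
    linear_combination 2 * o
  have sz : ⟪z, s⟫ = 0 := by
    simp only [hs, inner_add_right, inner_smul_right, zr, hzx, hzy, hz3, hzt, p_eq]
    linear_combination ω * o
  have st : ⟪t, s⟫ = 0 := by
    simp only [hs, inner_add_right, inner_smul_right, tr, htx, hty, ht3, htz, p_eq]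
    linear_combination 2 * o
  have sr : ⟪r, s⟫ = 0 := by
    simp only [hs, inner_add_right, inner_smul_right, h.2.1, rx, ry, rz, rt, p_eq]
    linear_combination o
  have s0 : s = 0 := by
    rw [← inner_self_eq_zero (𝕜 := ℂ)]
    nth_rewrite 1 [hs]
    simp only [inner_add_left, inner_smul_left, sx, sy, sz, sr, st]
    ring
  apply h.2.2
  have : r = (-p) • t + (-(2 * (1 + ω))) • z + (-(p * (1 + ω))) • y + (-ω) • x := by
    rw [hs] at s0
    rw [← sub_eq_zero, ← s0]
    module
  rw [this]
  have h1o : 1 + ω ∈ Eis := add_mem (one_mem _) om_mem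
  have h2 : (2 : ℂ) ∈ Eis := by exact_mod_cast natCast_mem Eis 2
  exact L.add_mem (L.add_mem (L.add_mem (smul_mem_E L (neg_mem p_mem) htL)
    (smul_mem_E L (neg_mem (mul_mem h2 h1o)) hzL)) (smul_mem_E L (neg_mem (mul_mem p_mem h1o)) hyL))
    (smul_mem_E L (neg_mem om_mem) hxL)

/-- Either the span of `S` is `K` or there is an outside root not orthogonal to `S`. -/
theorem step (K : Submodule Eis V)
    (hgen : K = Submodule.span Eis {x | x ∈ K ∧ ⟪x, x⟫ = 3})
    (hindec : ¬ ∃ K₁ K₂ : Submodule Eis V, K₁ ≠ ⊥ ∧ K₂ ≠ ⊥ ∧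
      (∀ x ∈ K₁, ∀ y ∈ K₂, ⟪x, y⟫ = 0) ∧ K₁ ⊔ K₂ = K) (S : Set V) (hS : S ⊆ K)
    (hne : ∃ x ∈ S, x ≠ 0) :
    K = Submodule.span Eis S ∨ ∃ r, Out K (Submodule.span Eis S) r ∧ ∃ x ∈ S, ⟪x, r⟫ ≠ 0 := by
  by_contra hcon
  push Not at hcon
  obtain ⟨hKS, hor⟩ := hcon
  have hle : Submodule.span Eis S ≤ K := Submodule.span_le.2 hS
  set T : Set V := {r | Out K (Submodule.span Eis S) r} with hT
  have hTle : Submodule.span Eis T ≤ K := Submodule.span_le.2 fun r hr => hr.1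
  apply hindec
  refine ⟨Submodule.span Eis S, Submodule.span Eis T, ?_, ?_, ?_, ?_⟩
  · obtain ⟨x, hx, hx0⟩ := hne
    intro h
    exact hx0 ((Submodule.mem_bot _).1 (h ▸ Submodule.subset_span hx))
  · intro h
    apply hKS
    apply le_antisymm _ hle
    rw [hgen]
    apply Submodule.span_le.2
    intro r hr
    by_contra hrS
    have : r ∈ Submodule.span Eis T := Submodule.subset_span ⟨hr.1, hr.2, hrS⟩
    rw [h, Submodule.mem_bot] at this
    exact hrS (this ▸ Submodule.zero_mem _)
  · intro x hx y hy
    induction hx, hy using Submodule.span_induction₂ with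
    | mem_mem x y hx hy => exact hor y hy x hx
    | zero_left y hy => simp
    | zero_right x hx => simp
    | add_left x y z _ _ _ h1 h2 => rw [inner_add_left, h1, h2, add_zero]
    | add_right x y z _ _ _ h1 h2 => rw [inner_add_right, h1, h2, add_zero]
    | smul_left c x y _ _ h =>
      have : c • x = (c : ℂ) • x := rfl
      rw [this, inner_smul_left, h, mul_zero]
    | smul_right c x y _ _ h =>
      have : c • y = (c : ℂ) • y := rfl
      rw [this, inner_smul_right, h, mul_zero]
  · apply le_antisymm (sup_le hle hTle)
    rw [hgen]
    apply Submodule.span_le.2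
    intro r hr
    by_cases hrS : r ∈ Submodule.span Eis S
    · exact Submodule.mem_sup_left hrS
    · exact Submodule.mem_sup_right (Submodule.subset_span ⟨hr.1, hr.2, hrS⟩)

end lat

theorem eisenstein_root_lattice_classification
    {V : Type*} [NormedAddCommGroup V] [InnerProductSpace ℂ V] [FiniteDimensional ℂ V]
    (K : Submodule Eis V) (hKne : K ≠ ⊥) (hKfg : K.FG)
    (hint : ∀ x ∈ K, ∀ y ∈ K, ∃ a ∈ Eis, ⟪x, y⟫ = θ * a)
    (hgen : K = Submodule.span Eis {x | x ∈ K ∧ ⟪x, x⟫ = 3})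
    (hindec : ¬ ∃ K₁ K₂ : Submodule Eis V, K₁ ≠ ⊥ ∧ K₂ ≠ ⊥ ∧
      (∀ x ∈ K₁, ∀ y ∈ K₂, ⟪x, y⟫ = 0) ∧ K₁ ⊔ K₂ = K) :
    ∃ k ∈ ({1, 2, 3, 4} : Set ℕ), ∃ x : Fin k → V,
      K = Submodule.span Eis (Set.range x) ∧
      (∀ i, ⟪x i, x i⟫ = 3) ∧
      (∀ (i : Fin k) (h : (i : ℕ) + 1 < k), ⟪x i, x ⟨(i : ℕ) + 1, h⟩⟫ = -p) ∧
      (∀ i j : Fin k, (i : ℕ) + 1 < (j : ℕ) → ⟪x i, x j⟫ = 0) := by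
  have hK : Int' K := hint
  have n0 : ∀ x : V, ⟪x, x⟫ = 3 → x ≠ 0 := by
    rintro x hx rfl
    simp at hx
  have hx : ∃ x, x ∈ K ∧ ⟪x, x⟫ = 3 := by
    by_contra hcon
    push Not at hcon
    apply hKne
    rw [hgen, Submodule.span_eq_bot]
    intro x hx
    exact absurd hx.2 (hcon x hx.1)
  obtain ⟨x, hxK, hx3⟩ := hx
  rcases step K hgen hindec {x} (by simpa using hxK) ⟨x, by simp, n0 x hx3⟩ with h | ⟨r, hr, y, hy, hyr⟩
  · refine ⟨1, by simp, ![x], ?_, ?_, ?_, ?_⟩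
    · rw [h]; simp
    · intro i; fin_cases i; simpa using hx3
    · intro i h; omega
    · intro i j h; omega
  rw [Set.mem_singleton_iff] at hy
  subst hy
  rename' y => x
  obtain ⟨y, hy, hxy, -⟩ := rescale hK (L := Submodule.span Eis {x}) (Submodule.span_le.2 (by simpa using hxK))
    (Submodule.subset_span (Set.mem_singleton x)) hx3 hr hyr
  clear! r
  obtain ⟨hyK, hy3, -⟩ := hy
  have hS : ({x, y} : Set V) ⊆ K := by
    rintro _ (rfl | rfl) <;> assumption
  rcases step K hgen hindec {x, y} hS ⟨x, by simp, n0 x hx3⟩ with h | ⟨r, hr, u, hu, hur⟩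
  · refine ⟨2, by simp, ![x, y], ?_, ?_, ?_, ?_⟩
    · rw [h]; simp [Set.pair_comm]
    · intro i; fin_cases i <;> assumption
    · intro i h; fin_cases i
      · simpa using hxy
      · simp at h
    · intro i j h; omega
  have hn : ⟪x, r⟫ ≠ 0 ∨ ⟪y, r⟫ ≠ 0 := by
    rcases hu with rfl | rfl <;> tauto
  have hL := Submodule.span_le.2 hS
  have mx : x ∈ Submodule.span Eis ({x, y} : Set V) := Submodule.subset_span (by simp)
  have my : y ∈ Submodule.span Eis ({x, y} : Set V) := Submodule.subset_span (by simp)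
  obtain ⟨s, hs, sx, sy⟩ := lemC hK hL mx hx3 my hy3 hxy hr hn
  obtain ⟨z, hz, hyz, hall⟩ := rescale hK hL my hy3 hs sy
  have hxz := hall _ sx
  clear hall sx sy mx my hL hn hu hur hS
  clear! s r
  obtain ⟨hzK, hz3, -⟩ := hz
  have hS : ({x, y, z} : Set V) ⊆ K := by
    rintro _ (rfl | rfl | rfl) <;> assumption
  rcases step K hgen hindec {x, y, z} hS ⟨x, by simp, n0 x hx3⟩ with h | ⟨r, hr, u, hu, hur⟩
  · refine ⟨3, by simp, ![x, y, z], ?_, ?_, ?_, ?_⟩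
    · rw [h]; congr 1; ext v; simp [eq_comm]; tauto
    · intro i; fin_cases i <;> assumption
    · intro i h; fin_cases i
      · simpa using hxy
      · simpa using hyz
      · simp at h
    · intro i j h; fin_cases i <;> fin_cases j <;> simp at h ⊢
      simpa using hxz
  have hn : ⟪x, r⟫ ≠ 0 ∨ ⟪y, r⟫ ≠ 0 ∨ ⟪z, r⟫ ≠ 0 := by
    rcases hu with rfl | rfl | rfl <;> tauto
  have hL := Submodule.span_le.2 hS
  have mx : x ∈ Submodule.span Eis ({x, y, z} : Set V) := Submodule.subset_span (by simp)
  have my : y ∈ Submodule.span Eis ({x, y, z} : Set V) := Submodule.subset_span (by simp)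
  have mz : z ∈ Submodule.span Eis ({x, y, z} : Set V) := Submodule.subset_span (by simp)
  obtain ⟨s, hs, sx, sy, sz⟩ := lem3 hK hL mx hx3 my hy3 mz hz3 hxy hyz hxz hr hn
  obtain ⟨t, ht, hzt, hall⟩ := rescale hK hL mz hz3 hs sz
  have hxt := hall _ sx
  have hyt := hall _ sy
  clear hall sx sy sz mx my mz hL hn hu hur hS
  clear! s r
  obtain ⟨htK, ht3, -⟩ := ht
  have hS : ({x, y, z, t} : Set V) ⊆ K := by
    rintro _ (rfl | rfl | rfl | rfl) <;> assumption
  rcases step K hgen hindec {x, y, z, t} hS ⟨x, by simp, n0 x hx3⟩ with h | ⟨r, hr, u, hu, hur⟩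
  · refine ⟨4, by simp, ![x, y, z, t], ?_, ?_, ?_, ?_⟩
    · rw [h]; congr 1; ext v; simp [eq_comm]; tauto
    · intro i; fin_cases i <;> assumption
    · intro i h; fin_cases i
      · simpa using hxy
      · simpa using hyz
      · simpa using hzt
      · simp at h
    · intro i j h; fin_cases i <;> fin_cases j <;> simp at h ⊢
      · simpa using hxz
      · simpa using hxt
      · simpa using hyt
  exfalso
  have hn : ⟪x, r⟫ ≠ 0 ∨ ⟪y, r⟫ ≠ 0 ∨ ⟪z, r⟫ ≠ 0 ∨ ⟪t, r⟫ ≠ 0 := by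
    rcases hu with rfl | rfl | rfl | rfl <;> tauto
  exact lem4 hK (Submodule.span_le.2 hS) (Submodule.subset_span (by simp)) hx3
    (Submodule.subset_span (by simp)) hy3 (Submodule.subset_span (by simp)) hz3
    (Submodule.subset_span (by simp)) ht3 hxy hyz hzt hxz hxt hyt hr hn
end

section
/- Let V be a complex inner product space and let x_1, x_2, x_3, x_4 ∈ V satisfy |x_i|² = 3 for all i, ⟨x_1,x_2⟩ = ⟨x_2,x_3⟩ = ⟨x_3,x_4⟩ = −p, ⟨x_1,x_4⟩ = −ω̄·p, and ⟨x_1,x_3⟩ = ⟨x_2,x_4⟩ = 0 (the circuit diagram Circ_{4,ω̄}). Set x_4' = ω̄·x_2 − p·x_3 − x_4. Then |x_4'|² = 3, ⟨x_1,x_4'⟩ = 0, ⟨x_2,x_4'⟩ = 0, ⟨x_3,x_4'⟩ = −p, and {x_1, x_2, x_3, x_4'} generates the same ℤ[ω]-submodule of V as {x_1, x_2, x_3, x_4}; i.e. the new quadruple forms the linear diagram of E_8^ℰ. (Hence L(Circ_{4,ω̄}) is isometric to E_8^ℰ.) -/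
/- The circuit diagram Circ_{4,ω̄} is equivalent to the linear E₈ᵉ diagram:
   replacing x₄ by x₄' = ω̄x₂ - p x₃ - x₄ gives the linear diagram, generating
   the same ℤ[ω]-submodule. -/

open scoped ComplexInnerProductSpace

set_option synthInstance.maxHeartbeats 1000000
set_option maxHeartbeats 1000000

theorem aux_omega : ω ^ 2 + ω + 1 = 0 ∧ starRingEnd ℂ ω = -1 - ω := by
  have hp : IsPrimitiveRoot ω 3 := by
    have := Complex.isPrimitiveRoot_exp 3 (by norm_num)
    simpa [ω] using this
  have hsum : ω ^ 2 + ω + 1 = 0 := by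
    have := hp.geom_sum_eq_zero (by norm_num)
    simp [Finset.sum_range_succ] at this
    linear_combination this
  refine ⟨hsum, ?_⟩
  have hc : starRingEnd ℂ ω * ω = 1 := by
    rw [mul_comm, Complex.mul_conj, Complex.normSq_eq_norm_sq, hp.norm'_eq_one (by norm_num)]
    norm_num
  linear_combination (-1 - ω) * hc + (starRingEnd ℂ ω) * hsum

theorem circ4_equiv_E8
    {V : Type*} [NormedAddCommGroup V] [InnerProductSpace ℂ V]
    (x₁ x₂ x₃ x₄ : V)
    (h1 : ⟪x₁, x₁⟫ = 3) (h2 : ⟪x₂, x₂⟫ = 3) (h3 : ⟪x₃, x₃⟫ = 3) (h4 : ⟪x₄, x₄⟫ = 3)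
    (h12 : ⟪x₁, x₂⟫ = -p) (h23 : ⟪x₂, x₃⟫ = -p) (h34 : ⟪x₃, x₄⟫ = -p)
    (h14 : ⟪x₁, x₄⟫ = -(starRingEnd ℂ ω * p))
    (h13 : ⟪x₁, x₃⟫ = 0) (h24 : ⟪x₂, x₄⟫ = 0) :
    ⟪starRingEnd ℂ ω • x₂ - p • x₃ - x₄, starRingEnd ℂ ω • x₂ - p • x₃ - x₄⟫ = 3 ∧
    ⟪x₁, starRingEnd ℂ ω • x₂ - p • x₃ - x₄⟫ = 0 ∧
    ⟪x₂, starRingEnd ℂ ω • x₂ - p • x₃ - x₄⟫ = 0 ∧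
    ⟪x₃, starRingEnd ℂ ω • x₂ - p • x₃ - x₄⟫ = -p ∧
    Submodule.span Eis ({x₁, x₂, x₃, starRingEnd ℂ ω • x₂ - p • x₃ - x₄} : Set V) =
      Submodule.span Eis ({x₁, x₂, x₃, x₄} : Set V) := by
  obtain ⟨hs, hc⟩ := aux_omega
  have hp : p = 2 + ω := by rw [p, hc]; ring
  have hcp : starRingEnd ℂ p = 1 - ω := by rw [p]; simp
  have h32 : ⟪x₃, x₂⟫ = -(1 - ω) := by rw [← inner_conj_symm, h23, map_neg, hcp]
  have h43 : ⟪x₄, x₃⟫ = -(1 - ω) := by rw [← inner_conj_symm, h34, map_neg, hcp]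
  have h42 : ⟪x₄, x₂⟫ = 0 := by rw [← inner_conj_symm, h24, map_zero]
  have e1 : ⟪x₁, starRingEnd ℂ ω • x₂ - p • x₃ - x₄⟫ = 0 := by
    simp only [inner_sub_right, inner_smul_right, h12, h13, h14]; ring
  have e2 : ⟪x₂, starRingEnd ℂ ω • x₂ - p • x₃ - x₄⟫ = 0 := by
    simp only [inner_sub_right, inner_smul_right, h2, h23, h24, hc, hp]
    linear_combination hs
  have e3 : ⟪x₃, starRingEnd ℂ ω • x₂ - p • x₃ - x₄⟫ = -p := by
    simp only [inner_sub_right, inner_smul_right, h32, h3, h34, hc, hp]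
    linear_combination -hs
  have e4 : ⟪x₄, starRingEnd ℂ ω • x₂ - p • x₃ - x₄⟫ = 0 := by
    simp only [inner_sub_right, inner_smul_right, h42, h43, h4, hc, hp]
    linear_combination -hs
  refine ⟨?_, e1, e2, e3, ?_⟩
  · rw [inner_sub_left, inner_sub_left, inner_smul_left, inner_smul_left, e2, e3, e4, hcp, hp]
    linear_combination -hs
  · have hω : ω ∈ Eis := Subring.subset_closure rfl
    have hcE : starRingEnd ℂ ω ∈ Eis := by
      rw [hc]; exact sub_mem (neg_mem (one_mem _)) hω
    have hpE : p ∈ Eis := sub_mem (one_mem _) hcE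
    have key : ∀ (S : Submodule Eis V), x₂ ∈ S → x₃ ∈ S →
        starRingEnd ℂ ω • x₂ - p • x₃ ∈ S := fun S a b =>
      sub_mem (S.smul_mem (⟨_, hcE⟩ : Eis) a) (S.smul_mem (⟨_, hpE⟩ : Eis) b)
    apply le_antisymm
    · rw [Submodule.span_le]
      have m : ∀ y ∈ ({x₁, x₂, x₃, x₄} : Set V), y ∈ Submodule.span Eis ({x₁, x₂, x₃, x₄} : Set V) :=
        fun y hy => Submodule.subset_span hy
      rintro y (rfl | rfl | rfl | rfl)
      · exact m _ (by simp)
      · exact m _ (by simp)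
      · exact m _ (by simp)
      · exact sub_mem (key _ (m _ (by simp)) (m _ (by simp))) (m _ (by simp))
    · rw [Submodule.span_le]
      set z := starRingEnd ℂ ω • x₂ - p • x₃ - x₄ with hz
      have m : ∀ y ∈ ({x₁, x₂, x₃, z} : Set V), y ∈ Submodule.span Eis ({x₁, x₂, x₃, z} : Set V) :=
        fun y hy => Submodule.subset_span hy
      have h4z : x₄ = starRingEnd ℂ ω • x₂ - p • x₃ - z := by rw [hz]; abel
      have m4 : x₄ ∈ Submodule.span Eis ({x₁, x₂, x₃, z} : Set V) := by
        have := sub_mem (key _ (m x₂ (by simp)) (m x₃ (by simp))) (m z (by simp))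
        rwa [← h4z] at this
      intro y hy
      simp only [Set.mem_insert_iff, Set.mem_singleton_iff] at hy
      rcases hy with h | h | h | h
      · rw [h]; exact m _ (by simp)
      · rw [h]; exact m _ (by simp)
      · rw [h]; exact m _ (by simp)
      · rw [h]; exact m4
end

section
/- Let V be a finite-dimensional complex inner product space, Φ a nonempty finite set of nonzero vectors of V, and μ : Φ → ℝ a function with μ(r) > 0 for every r ∈ Φ. Then there exists a vector w ∈ V with ⟨r,w⟩ ≠ 0 for all r ∈ Φ such that Σ_{r∈Φ} μ(r)·(⟨r,w⟩/|⟨r,w⟩|)·r = w; that is, the map α(w) = Σ_{r∈Φ} μ(r)(⟨r,w⟩/|⟨r,w⟩|) r, defined on the complement of the union of the hyperplanes r^⊥, has a fixed point. -/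
/- Existence of Weyl vectors: the averaging map
   α(w) = Σ_{r∈Φ} μ(r)(⟨r,w⟩/|⟨r,w⟩|) r has a fixed point away from the
   mirrors. -/

open scoped ComplexInnerProductSpace

set_option synthInstance.maxHeartbeats 1000000
set_option maxHeartbeats 1000000

theorem weyl_phase (a : ℂ) : ∃ z : Circle, (z : ℂ) * (starRingEnd ℂ) a = (‖a‖ : ℂ) := by
  refine ⟨Circle.exp a.arg, ?_⟩
  have h : (‖a‖ : ℂ) * (Circle.exp a.arg : ℂ) = a := by
    rw [Circle.coe_exp]; exact Complex.norm_mul_exp_arg_mul_I a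
  have h1 : (Circle.exp a.arg : ℂ) * (starRingEnd ℂ) (Circle.exp a.arg : ℂ) = 1 := by
    rw [Complex.mul_conj, Circle.normSq_coe]; simp
  generalize (Circle.exp a.arg : ℂ) = e at h h1
  have h2 : (starRingEnd ℂ) a = (‖a‖ : ℂ) * (starRingEnd ℂ) e := by
    conv_lhs => rw [← h]
    simp
  rw [h2]
  linear_combination (‖a‖ : ℂ) * h1

theorem weyl_eq_norm (b : ℂ) (h : ‖b‖ ≤ b.re) : b = (‖b‖ : ℂ) := by
  have h1 : b.re = ‖b‖ := le_antisymm (Complex.re_le_norm b) h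
  have h2 := Complex.sq_norm b
  rw [Complex.normSq_apply] at h2
  have h3 : b.im = 0 := by
    have : b.im * b.im = 0 := by rw [← h1] at h2; nlinarith
    exact mul_self_eq_zero.mp this
  apply Complex.ext
  · simpa using h1
  · simpa using h3

theorem weyl_step {V : Type*} [NormedAddCommGroup V] [InnerProductSpace ℂ V]
    (u r : V) (hr : r ≠ 0) (k : ℝ) (hk : 0 < k) (c : Circle)
    (hmax : ∀ z : Circle, ‖u + ((k : ℂ) * z) • r‖ ≤ ‖u + ((k : ℂ) * c) • r‖) :
    ∃ t : ℝ, 0 < t ∧ ⟪r, u + ((k : ℂ) * c) • r⟫ = (t : ℂ) * c := by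
  have key : ∀ z : Circle, ‖u + ((k : ℂ) * z) • r‖ ^ 2
      = ‖u‖ ^ 2 + 2 * (k * ((z : ℂ) * (starRingEnd ℂ) ⟪r, u⟫).re) + (k * ‖r‖) ^ 2 := by
    intro z
    rw [norm_add_sq (𝕜 := ℂ), inner_smul_right, norm_smul, inner_conj_symm, mul_assoc]
    simp [abs_of_pos hk, Circle.norm_coe z]
  obtain ⟨z, hz⟩ := weyl_phase ⟪r, u⟫
  have h1 : ‖u + ((k : ℂ) * z) • r‖ ^ 2 ≤ ‖u + ((k : ℂ) * c) • r‖ ^ 2 := by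
    gcongr; exact hmax z
  rw [key, key, hz, Complex.ofReal_re] at h1
  have h2 : ‖⟪r, u⟫‖ ≤ ((c : ℂ) * (starRingEnd ℂ) ⟪r, u⟫).re := by
    have : k * ‖⟪r, u⟫‖ ≤ k * ((c : ℂ) * (starRingEnd ℂ) ⟪r, u⟫).re := by linarith
    exact le_of_mul_le_mul_left this hk
  have h4 : ‖(c : ℂ) * (starRingEnd ℂ) ⟪r, u⟫‖ = ‖⟪r, u⟫‖ := by
    rw [norm_mul, Circle.norm_coe, one_mul, RCLike.norm_conj]
  have h3 := weyl_eq_norm ((c : ℂ) * (starRingEnd ℂ) ⟪r, u⟫) (h4.le.trans h2)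
  rw [h4] at h3
  have h5 : (c : ℂ) * (starRingEnd ℂ) (c : ℂ) = 1 := by
    rw [Complex.mul_conj, Circle.normSq_coe]; simp
  have h6 := congrArg (starRingEnd ℂ) h3
  simp only [map_mul, Complex.conj_conj, Complex.conj_ofReal] at h6
  have hr' : 0 < ‖r‖ := norm_pos_iff.mpr hr
  refine ⟨‖⟪r, u⟫‖ + k * ‖r‖ ^ 2, by positivity, ?_⟩
  rw [inner_add_right, inner_smul_right, inner_self_eq_norm_sq_to_K]
  push_cast
  simp only [Complex.coe_algebraMap]
  linear_combination (c : ℂ) * h6 - ⟪r, u⟫ * h5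

theorem weyl_vector_exists
    {V : Type*} [NormedAddCommGroup V] [InnerProductSpace ℂ V] [FiniteDimensional ℂ V]
    (Φ : Finset V) (hne : Φ.Nonempty) (h0 : (0 : V) ∉ Φ)
    (μ : V → ℝ) (hμ : ∀ r ∈ Φ, 0 < μ r) :
    ∃ w : V, (∀ r ∈ Φ, ⟪r, w⟫ ≠ 0) ∧
      ∑ r ∈ Φ, ((μ r : ℂ) * (⟪r, w⟫ / (‖⟪r, w⟫‖ : ℂ))) • r = w := by
  classical
  let F : (V → Circle) → V := fun c => ∑ r ∈ Φ, ((μ r : ℂ) * (c r : ℂ)) • r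
  have hF : Continuous fun c => ‖F c‖ := by
    refine continuous_norm.comp (continuous_finsetSum _ fun r _ => ?_)
    exact (continuous_const.mul (continuous_subtype_val.comp (continuous_apply r))).smul
      continuous_const
  obtain ⟨c, -, hc⟩ := isCompact_univ.exists_isMaxOn
    (⟨fun _ => 1, trivial⟩ : (Set.univ : Set (V → Circle)).Nonempty) hF.continuousOn
  have hc' : ∀ d, ‖F d‖ ≤ ‖F c‖ := fun d => hc (Set.mem_univ d)
  have main : ∀ r ∈ Φ, ∃ t : ℝ, 0 < t ∧ ⟪r, F c⟫ = (t : ℂ) * (c r : ℂ) := by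
    intro r hr
    let u : V := ∑ s ∈ Φ.erase r, ((μ s : ℂ) * (c s : ℂ)) • s
    have hup : ∀ z : Circle, F (Function.update c r z) = u + ((μ r : ℂ) * z) • r := by
      intro z
      simp only [F, u]
      rw [← Finset.sum_erase_add _ _ hr, Function.update_self]
      congr 1
      refine Finset.sum_congr rfl fun s hs => ?_
      rw [Function.update_of_ne (Finset.ne_of_mem_erase hs)]
    have hself : F c = u + ((μ r : ℂ) * (c r : ℂ)) • r := by
      rw [← hup, Function.update_eq_self]
    rw [hself]
    refine weyl_step u r (fun h => h0 (h ▸ hr)) (μ r) (hμ r hr) (c r) fun z => ?_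
    rw [← hup, ← hself]
    exact hc' _
  refine ⟨F c, fun r hr => ?_, ?_⟩
  · obtain ⟨t, ht, h⟩ := main r hr
    rw [h]
    exact mul_ne_zero (by exact_mod_cast ht.ne') (Circle.coe_ne_zero _)
  · conv_rhs => simp only [F]
    refine Finset.sum_congr rfl fun r hr => ?_
    obtain ⟨t, ht, h⟩ := main r hr
    have ht' : (t : ℂ) ≠ 0 := by exact_mod_cast ht.ne'
    rw [h, norm_mul, Circle.norm_coe, mul_one, Complex.norm_real, Real.norm_of_nonneg ht.le,
      mul_div_cancel_left₀ _ ht']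
end

section
/- Let V be a finite-dimensional complex inner product space, Φ a nonempty finite set of nonzero vectors of V, and μ : Φ → ℝ with μ(r) > 0 for all r. Define S : V∖{0} → ℝ by S(w) = ‖w‖^{-1} Σ_{r∈Φ} μ(r)|⟨r,w⟩|, and for w with ⟨r,w⟩ ≠ 0 for all r ∈ Φ define α(w) = Σ_{r∈Φ} μ(r)(⟨r,w⟩/|⟨r,w⟩|) r. Then for any w ≠ 0 with ⟨r,w⟩ ≠ 0 for all r ∈ Φ, the (real) Fréchet derivative of S at w is zero if and only if α(w) = (S(w)/‖w‖)·w. -/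
/- Criticality criterion: for w off the mirrors, the real Fréchet derivative
   of S(w) = ‖w‖⁻¹ Σ μ(r)|⟨r,w⟩| vanishes at w iff α(w) = (S(w)/‖w‖)·w. -/

open scoped ComplexInnerProductSpace

set_option synthInstance.maxHeartbeats 1000000
set_option maxHeartbeats 1000000

theorem aux_norm {E : Type*} [NormedAddCommGroup E] [InnerProductSpace ℝ E] (z : E) (hz : z ≠ 0) :
    HasFDerivAt (fun x : E => ‖x‖) (‖z‖⁻¹ • innerSL ℝ z) z := by
  have hz' : ‖z‖ ≠ 0 := norm_ne_zero_iff.mpr hz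
  have h := ((hasStrictFDerivAt_norm_sq z).hasFDerivAt).sqrt (by positivity)
  have e : (fun x : E => √(‖x‖ ^ 2)) = fun x : E => ‖x‖ := by
    funext x; exact Real.sqrt_sq (norm_nonneg x)
  rw [e] at h
  convert h using 1
  ext y
  simp [Real.sqrt_sq (norm_nonneg z)]
  field_simp

noncomputable def auxL {V : Type*} [NormedAddCommGroup V] [InnerProductSpace ℂ V] (x : V) : V →L[ℝ] ℝ :=
  Complex.reCLM.comp ((innerSL ℂ x).restrictScalars ℝ)

theorem auxL_apply {V : Type*} [NormedAddCommGroup V] [InnerProductSpace ℂ V] (x y : V) :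
    auxL x y = (⟪x, y⟫ : ℂ).re := rfl

theorem aux_normC {V : Type*} [NormedAddCommGroup V] [InnerProductSpace ℂ V] (z : V) (hz : z ≠ 0) :
    HasFDerivAt (fun x : V => ‖x‖) (‖z‖⁻¹ • auxL z) z := by
  letI := InnerProductSpace.complexToReal (G := V)
  exact aux_norm z hz

theorem aux_inner {V : Type*} [NormedAddCommGroup V] [InnerProductSpace ℂ V] (r w : V)
    (h : ⟪r, w⟫ ≠ 0) :
    HasFDerivAt (fun v : V => ‖⟪r, v⟫‖)
      (auxL ((⟪r, w⟫ / (‖⟪r, w⟫‖ : ℂ)) • r)) w := by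
  have h1 : HasFDerivAt (fun v : V => ⟪r, v⟫) ((innerSL ℂ r).restrictScalars ℝ) w :=
    ((innerSL ℂ r).restrictScalars ℝ).hasFDerivAt
  have h2 := (aux_norm (⟪r, w⟫ : ℂ) h).comp w h1
  refine h2.congr_fderiv ?_
  ext y
  have hz' : ‖⟪r, w⟫‖ ≠ 0 := norm_ne_zero_iff.mpr h
  simp only [ContinuousLinearMap.comp_apply, ContinuousLinearMap.smul_apply, innerSL_apply_apply,
    ContinuousLinearMap.coe_restrictScalars', auxL_apply, inner_smul_left,
    Complex.inner, map_div₀, Complex.conj_ofReal, smul_eq_mul]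
  rw [div_mul_eq_mul_div]
  simp only [RCLike.re_to_complex, Complex.div_ofReal_re]
  rw [div_eq_inv_mul, mul_comm ⟪r, y⟫]

theorem critical_point_iff_eigenvector
    {V : Type*} [NormedAddCommGroup V] [InnerProductSpace ℂ V] [FiniteDimensional ℂ V]
    (Φ : Finset V) (hne : Φ.Nonempty) (h0 : (0 : V) ∉ Φ)
    (μ : V → ℝ) (hμ : ∀ r ∈ Φ, 0 < μ r)
    (S : V → ℝ) (hS : ∀ v : V, S v = ‖v‖⁻¹ * ∑ r ∈ Φ, μ r * ‖⟪r, v⟫‖)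
    (w : V) (hw : w ≠ 0) (hreg : ∀ r ∈ Φ, ⟪r, w⟫ ≠ 0) :
    fderiv ℝ S w = 0 ↔
      ∑ r ∈ Φ, ((μ r : ℂ) * (⟪r, w⟫ / (‖⟪r, w⟫‖ : ℂ))) • r = (S w / ‖w‖) • w := by
  have hN : ‖w‖ ≠ 0 := norm_ne_zero_iff.mpr hw
  set α : V := ∑ r ∈ Φ, ((μ r : ℂ) * (⟪r, w⟫ / (‖⟪r, w⟫‖ : ℂ))) • r with hα
  have hF : HasFDerivAt (fun v : V => ∑ r ∈ Φ, μ r * ‖⟪r, v⟫‖) (auxL α) w := by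
    have h := HasFDerivAt.fun_sum (u := Φ) (fun r hr => (aux_inner r w (hreg r hr)).const_mul (μ r))
    refine h.congr_fderiv ?_
    ext y
    simp only [ContinuousLinearMap.sum_apply, ContinuousLinearMap.smul_apply, auxL_apply, hα,
      sum_inner, Complex.re_sum, mul_smul, smul_eq_mul]
    refine Finset.sum_congr rfl fun r _ => ?_
    rw [inner_smul_left (_ • r), Complex.conj_ofReal, Complex.re_ofReal_mul]
  have hD : HasFDerivAt S (‖w‖⁻¹ • auxL (α - (S w / ‖w‖) • w)) w := by
    have hi := (hasDerivAt_inv hN).comp_hasFDerivAt w (aux_normC w hw)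
    have h := hi.mul hF
    have e : S = (fun v => ‖v‖⁻¹ * ∑ r ∈ Φ, μ r * ‖⟪r, v⟫‖) := funext hS
    have hw' := hS w
    rw [e]
    refine h.congr_fderiv ?_
    beta_reduce
    ext y
    simp [auxL_apply, inner_sub_left, ← Complex.coe_smul, inner_smul_left, ← Complex.ofReal_sum,
      ← Complex.ofReal_mul, ← Complex.ofReal_inv, ← Complex.ofReal_div, Complex.re_ofReal_mul,
      -Complex.ofReal_mul, -Complex.ofReal_inv, -Complex.ofReal_div, -Complex.ofReal_sum]
    field_simp
    ring
  rw [hD.fderiv, smul_eq_zero, ← sub_eq_zero (a := α)]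
  constructor
  · rintro (h | h)
    · exact absurd h (inv_ne_zero hN)
    · have := congrArg (fun L => L (α - (S w / ‖w‖) • w)) h
      simp only [auxL_apply, ContinuousLinearMap.zero_apply] at this
      exact inner_self_eq_zero (𝕜 := ℂ) |>.mp (by
        rw [← inner_self_ofReal_re (𝕜 := ℂ)]; simpa using this)
  · intro h
    right
    rw [h]
    ext y
    simp [auxL_apply]
end

section
/- Let V be a finite-dimensional complex inner product space, Φ a nonempty finite set of nonzero vectors of V, and μ : Φ → ℝ with μ(r) > 0 for all r. Define S : V∖{0} → ℝ by S(w) = ‖w‖^{-1} Σ_{r∈Φ} μ(r)|⟨r,w⟩|. If w ≠ 0 lies on some mirror, i.e. ⟨r_0,w⟩ = 0 for some r_0 ∈ Φ, then S does not have a local maximum at w: for every ε > 0 there exists w' ∈ V∖{0} with ‖w' − w‖ < ε and S(w') > S(w). -/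
/- S(w) = ‖w‖⁻¹ Σ μ(r)|⟨r,w⟩| has no local maximum at a nonzero point lying
   on a mirror. -/

open scoped ComplexInnerProductSpace

set_option synthInstance.maxHeartbeats 1000000
set_option maxHeartbeats 1000000

theorem no_local_max_on_mirror
    {V : Type*} [NormedAddCommGroup V] [InnerProductSpace ℂ V] [FiniteDimensional ℂ V]
    (Φ : Finset V) (hne : Φ.Nonempty) (h0 : (0 : V) ∉ Φ)
    (μ : V → ℝ) (hμ : ∀ r ∈ Φ, 0 < μ r)
    (S : V → ℝ) (hS : ∀ v : V, S v = ‖v‖⁻¹ * ∑ r ∈ Φ, μ r * ‖⟪r, v⟫‖)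
    (w : V) (hw : w ≠ 0) (r₀ : V) (hr₀ : r₀ ∈ Φ) (hwr₀ : ⟪r₀, w⟫ = 0) :
    ∀ ε > 0, ∃ w' : V, w' ≠ 0 ∧ ‖w' - w‖ < ε ∧ S w < S w' := by
  intro ε hε
  have hr : r₀ ≠ 0 := fun h => h0 (h ▸ hr₀)
  have hR : 0 < ‖r₀‖ := norm_pos_iff.mpr hr
  have hN : 0 < ‖w‖ := norm_pos_iff.mpr hw
  have hm := hμ r₀ hr₀
  set F : V → ℝ := fun v => ∑ r ∈ Φ, μ r * ‖⟪r, v⟫‖ with hF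
  have hF0 : 0 ≤ F w := Finset.sum_nonneg fun r hr => mul_nonneg (hμ r hr).le (norm_nonneg _)
  set c := μ r₀ * ‖r₀‖ ^ 2 with hc
  have hcpos : 0 < c := by positivity
  obtain ⟨t, ht, ht1, ht2⟩ : ∃ t : ℝ, 0 < t ∧ t * ‖r₀‖ < ε ∧
      F w * t * ‖r₀‖ ^ 2 < 2 * c * ‖w‖ ^ 2 := by
    have hD : 0 < F w * ‖r₀‖ ^ 2 + 1 := by positivity
    refine ⟨min (ε / (2 * ‖r₀‖)) (c * ‖w‖ ^ 2 / (F w * ‖r₀‖ ^ 2 + 1)), by positivity, ?_, ?_⟩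
    · have h := min_le_left (ε / (2 * ‖r₀‖)) (c * ‖w‖ ^ 2 / (F w * ‖r₀‖ ^ 2 + 1))
      rw [le_div_iff₀ (by positivity)] at h
      linarith
    · have h := min_le_right (ε / (2 * ‖r₀‖)) (c * ‖w‖ ^ 2 / (F w * ‖r₀‖ ^ 2 + 1))
      have hp : 0 < min (ε / (2 * ‖r₀‖)) (c * ‖w‖ ^ 2 / (F w * ‖r₀‖ ^ 2 + 1)) := by positivity
      rw [le_div_iff₀ hD] at h
      have : 0 < c * ‖w‖ ^ 2 := by positivity
      nlinarith
  -- finishing argument for a perturbation by `s` with `‖s‖ = t`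
  have key : ∀ s : ℂ, ‖s‖ = t → F w + t * c ≤ F (w + s • r₀) →
      ∃ w' : V, w' ≠ 0 ∧ ‖w' - w‖ < ε ∧ S w < S w' := by
    intro s hs hle
    have horth : ⟪w, s • r₀⟫ = 0 := by
      rw [inner_smul_right, inner_eq_zero_symm.mp hwr₀, mul_zero]
    have hpy := norm_add_sq_eq_norm_sq_add_norm_sq_of_inner_eq_zero w (s • r₀) horth
    have hn : ‖s • r₀‖ = t * ‖r₀‖ := by rw [norm_smul, hs]
    rw [hn] at hpy
    have hpos : 0 < ‖w + s • r₀‖ := by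
      by_contra h
      have h' : ‖w + s • r₀‖ = 0 := le_antisymm (not_lt.mp h) (norm_nonneg _)
      rw [h'] at hpy
      nlinarith [mul_pos hN hN, mul_self_nonneg (t * ‖r₀‖)]
    refine ⟨w + s • r₀, norm_pos_iff.mp hpos, by rw [add_sub_cancel_left, hn]; exact ht1, ?_⟩
    rw [hS, hS]
    change ‖w‖⁻¹ * F w < ‖w + s • r₀‖⁻¹ * F (w + s • r₀)
    rw [inv_mul_eq_div, inv_mul_eq_div, div_lt_div_iff₀ hN hpos]
    have h1 : 2 * ‖w‖ * ‖w + s • r₀‖ ≤ 2 * ‖w‖ ^ 2 + t ^ 2 * ‖r₀‖ ^ 2 := by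
      nlinarith [sq_nonneg (‖w‖ - ‖w + s • r₀‖)]
    have h2 := mul_le_mul_of_nonneg_left h1 hF0
    have h3 := mul_lt_mul_of_pos_left ht2 ht
    have h4 := mul_le_mul_of_nonneg_right hle (by positivity : 0 ≤ 2 * ‖w‖ ^ 2)
    have h5 : 2 * ‖w‖ * (F w * ‖w + s • r₀‖) < 2 * ‖w‖ * (F (w + s • r₀) * ‖w‖) := by
      nlinarith
    exact lt_of_mul_lt_mul_left h5 (by positivity)
  have hsum : 2 * F w + 2 * (t * c) ≤ F (w + (t : ℂ) • r₀) + F (w + (-t : ℂ) • r₀) := by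
    classical
    have e : 2 * (t * c) = ∑ r ∈ Φ, (if r = r₀ then 2 * (t * c) else 0) := by
      rw [Finset.sum_ite_eq' Φ r₀, if_pos hr₀]
    rw [e]
    simp only [hF]
    rw [Finset.mul_sum, ← Finset.sum_add_distrib, ← Finset.sum_add_distrib]
    refine Finset.sum_le_sum fun r hrm => ?_
    simp only [inner_add_right, inner_smul_right]
    split_ifs with h
    · subst h
      rw [hwr₀, inner_self_eq_norm_sq_to_K]
      simp [abs_of_pos ht, hc]
      apply le_of_eq
      ring
    · have h1 : ‖(2 : ℂ) * ⟪r, w⟫‖ ≤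
          ‖⟪r, w⟫ + (t : ℂ) * ⟪r, r₀⟫‖ + ‖⟪r, w⟫ + (-t : ℂ) * ⟪r, r₀⟫‖ := by
        refine le_trans (le_of_eq ?_) (norm_add_le _ _)
        congr 1
        ring
      rw [norm_mul, Complex.norm_ofNat] at h1
      nlinarith [mul_le_mul_of_nonneg_left h1 (hμ r hrm).le]
  rcases le_total (F w + t * c) (F (w + (t : ℂ) • r₀)) with h | h
  · exact key _ (by simp [abs_of_pos ht]) h
  · exact key (-t : ℂ) (by simp [abs_of_pos ht]) (by linarith)
end

section
/- Let n ≥ 2 and let x_0, x_1, …, x_n be elements of a group G satisfying the affine A_n Coxeter relations: x_i x_{i+1} x_i = x_{i+1} x_i x_{i+1} for all i (indices modulo n+1), and x_i x_j = x_j x_i whenever i − j ≢ ±1 (mod n+1). If x_0 x_1 ⋯ x_{n−1} = x_1 x_2 ⋯ x_n, then also x_1 x_2 ⋯ x_n = x_2 x_3 ⋯ x_n x_0. (That is, the relation rel_n(x_0,…,x_n) is cyclic in Cox(Ã_n, ∞): imposing it for one cyclic ordering forces it for the rotated ordering.) -/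
/- The relation rel_n(x_0,…,x_n) is cyclic in Cox(Ã_n, ∞): for elements
   x_0,…,x_n (indices mod n+1) of a group satisfying the affine A_n Coxeter
   relations, x_0⋯x_{n-1} = x_1⋯x_n implies x_1⋯x_n = x_2⋯x_n x_0. -/

theorem rel_n_cyclic_affine_An
    {G : Type*} [Group G] (n : ℕ) (hn : 2 ≤ n)
    (x : ZMod (n + 1) → G)
    (hbraid : ∀ i : ZMod (n + 1), x i * x (i + 1) * x i = x (i + 1) * x i * x (i + 1))
    (hcomm : ∀ i j : ZMod (n + 1), i - j ≠ 1 → i - j ≠ -1 → x i * x j = x j * x i)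
    (h : ((List.range n).map (fun i => x (i : ZMod (n + 1)))).prod
        = ((List.range n).map (fun i => x ((i : ZMod (n + 1)) + 1))).prod) :
    ((List.range n).map (fun i => x ((i : ZMod (n + 1)) + 1))).prod
        = ((List.range n).map (fun i => x ((i : ZMod (n + 1)) + 2))).prod := by
  obtain ⟨m, rfl⟩ : ∃ m, n = m + 2 := ⟨n - 2, by omega⟩
  have e1 : ((List.range (m + 2)).map (fun i : ℕ => x (i : ZMod (m + 2 + 1)))).prod
      = x 0 * (x (0 + 1) *
        ((List.range m).map (fun i : ℕ => x ((i + 2 : ℕ) : ZMod (m + 2 + 1)))).prod) := by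
    rw [List.prod_range_succ', List.prod_range_succ']
    simp [add_assoc, one_add_one_eq_two]
  have e2 : ((List.range (m + 2)).map (fun i : ℕ => x ((i : ZMod (m + 2 + 1)) + 1))).prod
      = x (0 + 1) *
        ((List.range (m + 1)).map (fun i : ℕ => x ((i : ZMod (m + 2 + 1)) + 2))).prod := by
    rw [List.prod_range_succ']
    have : ∀ i : ℕ, ((i.succ : ℕ) : ZMod (m + 2 + 1)) + 1 = (i : ZMod (m + 2 + 1)) + 2 := by
      intro i; push_cast; ring
    simp only [this, Nat.cast_zero]
  have e3 : ((List.range (m + 2)).map (fun i : ℕ => x ((i : ZMod (m + 2 + 1)) + 2))).prod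
      = ((List.range (m + 1)).map (fun i : ℕ => x ((i : ZMod (m + 2 + 1)) + 2))).prod * x 0 := by
    rw [List.prod_range_succ]
    have : ((m + 1 : ℕ) : ZMod (m + 2 + 1)) + 2 = 0 := by
      have := ZMod.natCast_self (m + 2 + 1)
      push_cast at this ⊢
      rw [← this]; ring
    rw [this]
  have hc : Commute (x 0)
      ((List.range m).map (fun i : ℕ => x ((i + 2 : ℕ) : ZMod (m + 2 + 1)))).prod := by
    apply Commute.list_prod_right
    intro y hy
    obtain ⟨i, hi, rfl⟩ := List.mem_map.1 hy
    rw [List.mem_range] at hi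
    apply hcomm
    · intro h0
      have h1 : ((i + 3 : ℕ) : ZMod (m + 2 + 1)) = 0 := by
        push_cast at h0 ⊢
        linear_combination -h0
      rw [ZMod.natCast_eq_zero_iff] at h1
      have := Nat.le_of_dvd (by omega) h1
      omega
    · intro h0
      have h1 : ((i + 1 : ℕ) : ZMod (m + 2 + 1)) = 0 := by
        push_cast at h0 ⊢
        linear_combination -h0
      rw [ZMod.natCast_eq_zero_iff] at h1
      have := Nat.le_of_dvd (by omega) h1
      omega
  have key : ∀ f : ZMod (m + 2 + 1) → G, (List.map f (do
        let a ← List.range (m + 2)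
        pure (a : ZMod (m + 2 + 1)))).prod
      = ((List.range (m + 2)).map (fun i : ℕ => f (i : ZMod (m + 2 + 1)))).prod := by
    intro f
    simp only [List.bind_eq_flatMap, List.pure_def, ← List.map_eq_flatMap, List.map_map]
    rfl
  rw [key, key, e1, e2] at h
  rw [key, key]
  rw [e2, e3]
  have hb := hbraid 0
  have hc := hc.eq
  generalize ((List.range m).map (fun i : ℕ => x ((i + 2 : ℕ) : ZMod (m + 2 + 1)))).prod = P at *
  generalize ((List.range (m + 1)).map
    (fun i : ℕ => x ((i : ZMod (m + 2 + 1)) + 2))).prod = Q at *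
  apply mul_left_cancel (a := x (0 + 1))
  rw [← mul_assoc _ Q, ← h]
  calc x (0 + 1) * (x 0 * (x (0 + 1) * P)) = (x (0 + 1) * x 0 * x (0 + 1)) * P := by group
    _ = x 0 * x (0 + 1) * (x 0 * P) := by rw [← hb]; group
    _ = _ := by rw [hc]; group
end

section
/- Let x, y, z be elements of a group G that pairwise braid: xyx = yxy, yzy = zyz, zxz = xzx. Then: (1) if xyzx = yzxy then yzxy = zxyz (the relation rel_4(x,y,z) is cyclic); and (2) if xyzxyz = yzxyzx then yzxyzx = zxyzxy (the relation rel_6(x,y,z) is cyclic). -/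
/- For pairwise braiding x, y, z (the Ã₂ Coxeter relations), the relations
   rel_4(x,y,z) and rel_6(x,y,z) are cyclic. -/

theorem rel6_iff_aux {G : Type*} [Group G] (x y z a : G)
    (hxy : x * y * x = y * x * y)
    (hzx : z * x * z = x * z * x) (h1 : y * z = a * y) (h2 : y * z = z * a) :
    x * y * z * x * y * z = y * z * x * y * z * x ↔ a * x * a = x * a * x := by
  have e1 : x * y * z * x * y * z = y * x * z * (a * x * a) := calc
    _ = x * y * z * x * (y * z) := by simp only [mul_assoc]
    _ = x * y * (z * x * z) * a := by rw [h2]; simp only [mul_assoc]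
    _ = (x * y * x) * z * x * a := by rw [hzx]; simp only [mul_assoc]
    _ = y * x * (y * z) * x * a := by rw [hxy]; simp only [mul_assoc]
    _ = _ := by rw [h2]; simp only [mul_assoc]
  have e2 : y * z * x * y * z * x = y * x * z * (x * a * x) := calc
    _ = y * z * x * (y * z) * x := by simp only [mul_assoc]
    _ = y * z * x * (z * a) * x := by rw [← h2]
    _ = y * (z * x * z) * a * x := by simp only [mul_assoc]
    _ = _ := by rw [hzx]; simp only [mul_assoc]
  rw [e1, e2, mul_right_inj]

theorem rel4_iff_aux {G : Type*} [Group G] (x y z a : G)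
    (hxy : x * y * x = y * x * y)
    (h1 : y * z = a * y) :
    x * y * z * x = y * z * x * y ↔ x * a = a * x := by
  have e1 : x * y * z * x = x * a * (y * x) := calc
    _ = x * (y * z) * x := by simp only [mul_assoc]
    _ = _ := by rw [h1]; simp only [mul_assoc]
  have e2 : y * z * x * y = a * x * (y * x) := calc
    _ = a * (y * x * y) := by rw [h1]; simp only [mul_assoc]
    _ = _ := by rw [← hxy]; simp only [mul_assoc]
  rw [e1, e2, mul_left_inj]

theorem rel4_and_rel6_cyclic
    {G : Type*} [Group G] (x y z : G)
    (hxy : x * y * x = y * x * y)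
    (hyz : y * z * y = z * y * z)
    (hzx : z * x * z = x * z * x) :
    (x * y * z * x = y * z * x * y → y * z * x * y = z * x * y * z) ∧
    (x * y * z * x * y * z = y * z * x * y * z * x →
      y * z * x * y * z * x = z * x * y * z * x * y) := by
  have a1 : y * z = (y * z * y⁻¹) * y := by group
  have a2 : y * z = z * (y * z * y⁻¹) := by
    rw [← mul_assoc, ← mul_assoc, eq_mul_inv_iff_mul_eq, hyz]
  have b1 : z * x = (z * x * z⁻¹) * z := by group
  have b2 : z * x = x * (z * x * z⁻¹) := by
    rw [← mul_assoc, ← mul_assoc, eq_mul_inv_iff_mul_eq, hzx]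
  have a3 : y * z * y⁻¹ = z⁻¹ * y * z := by
    rw [mul_assoc z⁻¹, eq_inv_mul_iff_mul_eq, ← a2]
  have r4 := rel4_iff_aux x y z _ hxy a1
  have r4' := rel4_iff_aux y z x _ hyz b1
  have r6 := rel6_iff_aux x y z _ hxy hzx a1 a2
  have r6' := rel6_iff_aux y z x _ hyz hxy b1 b2
  rw [a3] at r4 r6
  constructor
  · intro h
    have k := r4.1 h
    apply r4'.2
    have k2 := congrArg (fun t => z * t * z⁻¹) k
    simp only [mul_assoc, mul_inv_cancel_left, mul_inv_cancel, mul_one] at k2 ⊢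
    exact k2.symm
  · intro h
    have k := r6.1 h
    apply r6'.2
    have k2 := congrArg (fun t => z * t * z⁻¹) k
    simp only [mul_assoc, mul_inv_cancel_left, inv_mul_cancel_left, mul_inv_cancel, mul_one] at k2 ⊢
    exact k2.symm
end

section
/- Let x, y, z, w be elements of a group G satisfying the affine A_3 Coxeter relations: xyx = yxy, yzy = zyz, zwz = wzw, wxw = xwx, xz = zx, yw = wy. If xyzwxyzwx = yzwxyzwxy, then also yzwxyzwxy = zwxyzwxyz. (That is, the relation rel_9(x,y,z,w) is cyclic in Cox(Ã_3, ∞).) -/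
/- The relation rel_9(x,y,z,w) is cyclic in Cox(Ã₃, ∞): given the affine A₃
   Coxeter relations, xyzwxyzwx = yzwxyzwxy implies yzwxyzwxy = zwxyzwxyz. -/

theorem rel9_cyclic_affine_A3
    {G : Type*} [Group G] (x y z w : G)
    (hxy : x * y * x = y * x * y)
    (hyz : y * z * y = z * y * z)
    (hzw : z * w * z = w * z * w)
    (hwx : w * x * w = x * w * x)
    (hxz : x * z = z * x)
    (hyw : y * w = w * y)
    (h : x * y * z * w * x * y * z * w * x = y * z * w * x * y * z * w * x * y) :
    y * z * w * x * y * z * w * x * y = z * w * x * y * z * w * x * y * z := by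
  apply mul_left_cancel (a := y)
  have e0 : y * y * z * w * x * y * z * w * x * y = y * y * z * w * x * y * z * w * x * y := rfl
  have e1 : y * y * z * w * x * y * z * w * x * y = y * x * y * z * w * x * y * z * w * x := by
    rw [e0]
    simpa only [mul_assoc] using congrArg (fun t => (y) * t) (h.symm)
  have e2 : y * y * z * w * x * y * z * w * x * y = x * y * x * z * w * x * y * z * w * x := by
    rw [e1]
    simpa only [mul_assoc] using congrArg (fun t => t * (z * w * x * y * z * w * x)) (hxy.symm)
  have e3 : y * y * z * w * x * y * z * w * x * y = x * y * z * x * w * x * y * z * w * x := by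
    rw [e2]
    simpa only [mul_assoc] using congrArg (fun t => (x * y) * t * (w * x * y * z * w * x)) (hxz)
  have e4 : y * y * z * w * x * y * z * w * x * y = x * y * z * w * x * w * y * z * w * x := by
    rw [e3]
    simpa only [mul_assoc] using congrArg (fun t => (x * y * z) * t * (y * z * w * x)) (hwx.symm)
  have e5 : y * y * z * w * x * y * z * w * x * y = x * y * z * w * x * y * w * z * w * x := by
    rw [e4]
    simpa only [mul_assoc] using congrArg (fun t => (x * y * z * w * x) * t * (z * w * x)) (hyw.symm)
  have e6 : y * y * z * w * x * y * z * w * x * y = x * y * z * w * x * y * z * w * z * x := by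
    rw [e5]
    simpa only [mul_assoc] using congrArg (fun t => (x * y * z * w * x * y) * t * (x)) (hzw.symm)
  have e7 : y * y * z * w * x * y * z * w * x * y = x * y * z * w * x * y * z * w * x * z := by
    rw [e6]
    simpa only [mul_assoc] using congrArg (fun t => (x * y * z * w * x * y * z * w) * t) (hxz.symm)
  have e8 : y * y * z * w * x * y * z * w * x * y = y * z * w * x * y * z * w * x * y * z := by
    rw [e7]
    simpa only [mul_assoc] using congrArg (fun t => t * (z)) (h)
  simpa only [mul_assoc] using e8
end

section
/- Let x, y, z be elements of a group G and assume x braids with y: xyx = yxy. Then the following are equivalent: (i) xyzx = yzxy (the relation rel_4(x,y,z)); (ii) xyx⁻¹ commutes with z; (iii) yzy⁻¹ commutes with x. If moreover x braids with z (xzx = zxz), then (i)–(iii) are also equivalent to (iv): zxz⁻¹ commutes with y. -/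
theorem rel4_characterizations
    {G : Type*} [Group G] (x y z : G)
    (hxy : x * y * x = y * x * y) :
    ((x * y * z * x = y * z * x * y) ↔ (x * y * x⁻¹) * z = z * (x * y * x⁻¹)) ∧
    ((x * y * z * x = y * z * x * y) ↔ (y * z * y⁻¹) * x = x * (y * z * y⁻¹)) ∧
    (x * z * x = z * x * z →
      ((x * y * z * x = y * z * x * y) ↔ (z * x * z⁻¹) * y = y * (z * x * z⁻¹))) := by
  have e : x * y * x⁻¹ = y⁻¹ * x * y := by
    rw [mul_inv_eq_iff_eq_mul, mul_assoc, mul_assoc, eq_inv_mul_iff_mul_eq, ← mul_assoc,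
      ← mul_assoc, ← hxy]
  have h1 : (x * y * z * x = y * z * x * y) ↔
      (x * y * x⁻¹) * z = z * (x * y * x⁻¹) := by
    have a : (x * y * x⁻¹) * z = y⁻¹ * (x * y * z * x) * x⁻¹ := by rw [e]; group
    have b : z * (x * y * x⁻¹) = y⁻¹ * (y * z * x * y) * x⁻¹ := by group
    rw [a, b, mul_left_inj, mul_right_inj]
  refine ⟨h1, h1.trans ?_, fun hxz => h1.trans ?_⟩
  · have a : (y * z * y⁻¹) * x = y * (z * (x * y * x⁻¹)) * y⁻¹ := by rw [e]; group
    have b : x * (y * z * y⁻¹) = y * ((x * y * x⁻¹) * z) * y⁻¹ := by rw [e]; group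
    rw [a, b, mul_left_inj, mul_right_inj, eq_comm]
  · have e2 : z * x * z⁻¹ = x⁻¹ * z * x := by
      rw [mul_inv_eq_iff_eq_mul, mul_assoc, mul_assoc, eq_inv_mul_iff_mul_eq, ← mul_assoc,
        ← mul_assoc, hxz]
    have a : (z * x * z⁻¹) * y = x⁻¹ * (z * (x * y * x⁻¹)) * x := by rw [e2]; group
    have b : y * (z * x * z⁻¹) = x⁻¹ * ((x * y * x⁻¹) * z) * x := by rw [e2]; group
    rw [a, b, mul_left_inj, mul_right_inj, eq_comm]
end

section
/- Let x, y, z be elements of a group G and assume x braids with both y and z: xyx = yxy and xzx = zxz. Then the following are equivalent: (i) xyzxyz = yzxyzx (the relation rel_6(x,y,z)); (ii) xyx⁻¹ braids with z; (iii) yzy⁻¹ braids with x; (iv) zxz⁻¹ braids with y. -/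
/- Lemma on rel_6: if x braids with y and with z, then rel_6(x,y,z) ⟺
   c_x(y) braids with z ⟺ c_y(z) braids with x ⟺ c_z(x) braids with y. -/

theorem rel6_characterizations
    {G : Type*} [Group G] (x y z : G)
    (hxy : x * y * x = y * x * y)
    (hxz : x * z * x = z * x * z) :
    ((x * y * z * x * y * z = y * z * x * y * z * x) ↔
      (x * y * x⁻¹) * z * (x * y * x⁻¹) = z * (x * y * x⁻¹) * z) ∧
    ((x * y * z * x * y * z = y * z * x * y * z * x) ↔
      (y * z * y⁻¹) * x * (y * z * y⁻¹) = x * (y * z * y⁻¹) * x) ∧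
    ((x * y * z * x * y * z = y * z * x * y * z * x) ↔
      (z * x * z⁻¹) * y * (z * x * z⁻¹) = y * (z * x * z⁻¹) * y) := by
  have h1 : x * y * x⁻¹ = y⁻¹ * x * y := by
    rw [mul_inv_eq_iff_eq_mul, mul_assoc, mul_assoc, eq_inv_mul_iff_mul_eq]
    simpa only [mul_assoc] using hxy.symm
  have h2 : z * x * z⁻¹ = x⁻¹ * z * x := by
    rw [mul_inv_eq_iff_eq_mul, mul_assoc, mul_assoc, eq_inv_mul_iff_mul_eq]
    simpa only [mul_assoc] using hxz
  have key : ∀ a b l r p q : G, p = a * l * b → q = a * r * b → ((l = r) ↔ p = q) := by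
    intro a b l r p q hp hq
    rw [hp, hq, mul_left_inj, mul_right_inj]
  refine ⟨key y⁻¹ (z⁻¹ * x⁻¹) _ _ _ _ ?_ ?_, ?_, ?_⟩
  · calc _ = (y⁻¹ * x * y) * z * (x * y * x⁻¹) := by rw [← h1]
      _ = _ := by group
  · calc _ = z * x * y * x⁻¹ * z * x * x⁻¹ := by group
      _ = z * x * y * (x⁻¹ * z * x) * x⁻¹ := by group
      _ = z * x * y * (z * x * z⁻¹) * x⁻¹ := by rw [h2]
      _ = _ := by group
  · rw [eq_comm (a := y * z * y⁻¹ * x * (y * z * y⁻¹))]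
    refine key 1 (z⁻¹ * x⁻¹ * y⁻¹) _ _ _ _ ?_ ?_
    · calc _ = x * y * z * (y⁻¹ * x * y) * y⁻¹ := by group
        _ = x * y * z * (x * y * x⁻¹) * y⁻¹ := by rw [h1]
        _ = _ := by group
    · calc _ = y * z * (y⁻¹ * x * y) * z * y⁻¹ := by group
        _ = y * z * (x * y * x⁻¹) * z * y⁻¹ := by rw [h1]
        _ = y * z * x * y * (x⁻¹ * z * x) * x⁻¹ * y⁻¹ := by group
        _ = y * z * x * y * (z * x * z⁻¹) * x⁻¹ * y⁻¹ := by rw [h2]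
        _ = _ := by group
  · rw [eq_comm (a := z * x * z⁻¹ * y * (z * x * z⁻¹))]
    refine key (x⁻¹ * y⁻¹) z⁻¹ _ _ _ _ ?_ ?_
    · calc _ = y * (x⁻¹ * z * x) * y := by rw [h2]
        _ = x⁻¹ * (x * y * x⁻¹) * z * x * y := by group
        _ = x⁻¹ * (y⁻¹ * x * y) * z * x * y := by rw [h1]
        _ = _ := by group
    · calc _ = (x⁻¹ * z * x) * y * (z * x * z⁻¹) := by rw [← h2]
        _ = _ := by group
end

section
/- Let x, y, z, w be elements of a group G satisfying the affine A_3 Coxeter relations: xyx = yxy, yzy = zyz, zwz = wzw, wxw = xwx, xz = zx, yw = wy. Then the relation rel_9(x,y,z,w), i.e. xyzwxyzwx = yzwxyzwxy, holds if and only if (xy)z(xy)⁻¹ braids with w. -/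
/- Lemma on rel_9: under the affine A₃ Coxeter relations on x, y, z, w, the
   relation rel_9(x,y,z,w) holds iff c_{xy}(z) braids with w. -/

theorem rel9_characterization
    {G : Type*} [Group G] (x y z w : G)
    (hxy : x * y * x = y * x * y)
    (hyz : y * z * y = z * y * z)
    (hzw : z * w * z = w * z * w)
    (hwx : w * x * w = x * w * x)
    (hxz : x * z = z * x)
    (hyw : y * w = w * y) :
    (x * y * z * w * x * y * z * w * x = y * z * w * x * y * z * w * x * y) ↔
      ((x * y) * z * (x * y)⁻¹) * w * ((x * y) * z * (x * y)⁻¹) =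
        w * ((x * y) * z * (x * y)⁻¹) * w := by
  have e1 : y * z * y⁻¹ = z⁻¹ * y * z := by
    rw [mul_inv_eq_iff_eq_mul, mul_assoc z⁻¹, mul_assoc z⁻¹, eq_inv_mul_iff_mul_eq, ← mul_assoc]
    exact hyz.symm
  have e2 : x * y * x⁻¹ = y⁻¹ * x * y := by
    rw [mul_inv_eq_iff_eq_mul, mul_assoc y⁻¹, mul_assoc y⁻¹, eq_inv_mul_iff_mul_eq, ← mul_assoc]
    exact hxy.symm
  have e3 : w * x * w⁻¹ = x⁻¹ * w * x := by
    rw [mul_inv_eq_iff_eq_mul, mul_assoc x⁻¹, mul_assoc x⁻¹, eq_inv_mul_iff_mul_eq, ← mul_assoc]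
    exact hwx.symm
  have c1 : x * z⁻¹ = z⁻¹ * x := (Commute.inv_right (show Commute x z from hxz)).eq
  have c1' : z * x⁻¹ = x⁻¹ * z := (Commute.inv_right (show Commute z x from hxz.symm)).eq
  have c2 : w * y⁻¹ = y⁻¹ * w := (Commute.inv_right (show Commute w y from hyw.symm)).eq
  have c2' : y * w⁻¹ = w⁻¹ * y := (Commute.inv_right (show Commute y w from hyw)).eq
  obtain ⟨a, ha⟩ : ∃ a, a = (x * y) * z * (x * y)⁻¹ := ⟨_, rfl⟩
  rw [← ha]
  have h1 : a = z⁻¹ * y⁻¹ * x * y * z := by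
    calc a = x * (y * z * y⁻¹) * x⁻¹ := by rw [ha]; group
      _ = (x * z⁻¹) * y * (z * x⁻¹) := by rw [e1]; group
      _ = z⁻¹ * (x * y * x⁻¹) * z := by rw [c1, c1']; group
      _ = _ := by rw [e2]; group
  have h2 : (x * y * z * w) * (x * y * x⁻¹) * (x * y * z * w)⁻¹ = a * w * a⁻¹ := by
    calc _ = x * y * z * (w * y⁻¹) * x * (y * w⁻¹) * z⁻¹ * (x * y)⁻¹ := by rw [e2]; group
      _ = x * y * z * y⁻¹ * (w * x * w⁻¹) * y * z⁻¹ * (x * y)⁻¹ := by rw [c2, c2']; group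
      _ = _ := by rw [e3, ha]; group
  have h3 : (x * y * z * w) * (w⁻¹ * a * w) * (x * y * z * w)⁻¹ = x := by
    rw [h1]; group
  have k1 : (x * y * z * w * x * y * z * w * x = y * z * w * x * y * z * w * x * y) ↔
      (x * y * z * w) * (a * w * a⁻¹) * (x * y * z * w)⁻¹ = x := by
    rw [← h2]
    constructor
    · intro h
      have : (x * y * z * w) * ((x * y * z * w) * (x * y * x⁻¹) * (x * y * z * w)⁻¹)
          * (x * y * z * w)⁻¹ = x * (y * z * w * x * y * z * w * x * y) * x⁻¹ *
          (x * y * z * w)⁻¹ * (x * y * z * w)⁻¹ := by group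
      rw [this, ← h]; group
    · intro h
      have : y * z * w * x * y * z * w * x * y = x⁻¹ * ((x * y * z * w) * ((x * y * z * w) * (x * y * x⁻¹) * (x * y * z * w)⁻¹)
          * (x * y * z * w)⁻¹) * (x * y * z * w) * (x * y * z * w) * x := by group
      rw [this, h]; group
  rw [k1]
  have k2 : a * w * a = w * a * w ↔ a * w * a⁻¹ = w⁻¹ * a * w := by
    rw [mul_inv_eq_iff_eq_mul, mul_assoc w⁻¹, mul_assoc w⁻¹, eq_inv_mul_iff_mul_eq, ← mul_assoc]
    exact eq_comm
  rw [k2]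
  constructor
  · intro h
    have := h.trans h3.symm
    exact mul_left_cancel (mul_right_cancel this)
  · intro h
    rw [h, h3]
end

section
/- Let B₃₃ be the group presented by generators a_1,…,a_5 and relations: braids a_1a_2a_1 = a_2a_1a_2, a_2a_3a_2 = a_3a_2a_3, a_2a_4a_2 = a_4a_2a_4, a_3a_4a_3 = a_4a_3a_4, a_3a_5a_3 = a_5a_3a_5, a_4a_5a_4 = a_5a_4a_5, a_1a_5a_1 = a_5a_1a_5; commutations a_1a_3 = a_3a_1, a_1a_4 = a_4a_1, a_2a_5 = a_5a_2; and the cycle relations rel_4(a_2,a_3,a_4): a_2a_3a_4a_2 = a_3a_4a_2a_3, rel_4(a_3,a_4,a_5): a_3a_4a_5a_3 = a_4a_5a_3a_4, and rel_9(a_3,a_2,a_1,a_5): a_3a_2a_1a_5a_3a_2a_1a_5a_3 = a_2a_1a_5a_3a_2a_1a_5a_3a_2. Let B'₃₃ be the group presented by generators s,t,u,v,w and relations: braids sts = tst, tut = utu, uvu = vuv, twt = wtw, uwu = wuw; commutations su = us, sv = vs, sw = ws, tv = vt, vw = wv; and rel_6(t,u,w): tuwtuw = uwtuwt (the known presentation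 of the braid group of the unitary reflection group G₃₃). Then the assignment s ↦ a_1, t ↦ a_2, u ↦ a_3, v ↦ a_3a_4a_3⁻¹, w ↦ (a_2a_1)a_5(a_2a_1)⁻¹ extends to a group isomorphism from B'₃₃ onto B₃₃. -/
/- The new presentation B₃₃ (on the diagram D₃₃) and the known presentation
   B'₃₃ of the braid group of the unitary reflection group G₃₃ are equivalent:
   s ↦ a₁, t ↦ a₂, u ↦ a₃, v ↦ a₃a₄a₃⁻¹, w ↦ (a₂a₁)a₅(a₂a₁)⁻¹ extends to an
   isomorphism B'₃₃ ≃ B₃₃.  Generators a₁,…,a₅ are indexed by 0,…,4, and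
   likewise s,t,u,v,w by 0,…,4. -/

namespace G33Presentation

/-- `a i` is the free group generator corresponding to `a_{i+1}`. -/
def a (i : Fin 5) : FreeGroup (Fin 5) := FreeGroup.of i

/-- Relations of the presentation `B₃₃` on the diagram `D₃₃`. -/
def rels33 : Set (FreeGroup (Fin 5)) :=
  { a 0 * a 1 * a 0 * (a 1 * a 0 * a 1)⁻¹,
    a 1 * a 2 * a 1 * (a 2 * a 1 * a 2)⁻¹,
    a 1 * a 3 * a 1 * (a 3 * a 1 * a 3)⁻¹,
    a 2 * a 3 * a 2 * (a 3 * a 2 * a 3)⁻¹,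
    a 2 * a 4 * a 2 * (a 4 * a 2 * a 4)⁻¹,
    a 3 * a 4 * a 3 * (a 4 * a 3 * a 4)⁻¹,
    a 0 * a 4 * a 0 * (a 4 * a 0 * a 4)⁻¹,
    a 0 * a 2 * (a 2 * a 0)⁻¹,
    a 0 * a 3 * (a 3 * a 0)⁻¹,
    a 1 * a 4 * (a 4 * a 1)⁻¹,
    a 1 * a 2 * a 3 * a 1 * (a 2 * a 3 * a 1 * a 2)⁻¹,
    a 2 * a 3 * a 4 * a 2 * (a 3 * a 4 * a 2 * a 3)⁻¹,
    a 2 * a 1 * a 0 * a 4 * a 2 * a 1 * a 0 * a 4 * a 2 *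
      (a 1 * a 0 * a 4 * a 2 * a 1 * a 0 * a 4 * a 2 * a 1)⁻¹ }

/-- `b 0,…,b 4` are the free group generators `s, t, u, v, w`. -/
def b (i : Fin 5) : FreeGroup (Fin 5) := FreeGroup.of i

/-- Relations of the known presentation `B'₃₃` of `Braid(G₃₃)`. -/
def rels33' : Set (FreeGroup (Fin 5)) :=
  { b 0 * b 1 * b 0 * (b 1 * b 0 * b 1)⁻¹,
    b 1 * b 2 * b 1 * (b 2 * b 1 * b 2)⁻¹,
    b 2 * b 3 * b 2 * (b 3 * b 2 * b 3)⁻¹,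
    b 1 * b 4 * b 1 * (b 4 * b 1 * b 4)⁻¹,
    b 2 * b 4 * b 2 * (b 4 * b 2 * b 4)⁻¹,
    b 0 * b 2 * (b 2 * b 0)⁻¹,
    b 0 * b 3 * (b 3 * b 0)⁻¹,
    b 0 * b 4 * (b 4 * b 0)⁻¹,
    b 1 * b 3 * (b 3 * b 1)⁻¹,
    b 3 * b 4 * (b 4 * b 3)⁻¹,
    b 1 * b 2 * b 4 * b 1 * b 2 * b 4 * (b 2 * b 4 * b 1 * b 2 * b 4 * b 1)⁻¹ }

/-- `A i` is the image of `a i` in `B₃₃`. -/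
def A (i : Fin 5) : PresentedGroup rels33 := PresentedGroup.of i

section helpers
variable {G : Type*} [Group G]

/-- The braid relation. -/
def Br (x y : G) : Prop := x * y * x = y * x * y

theorem Br.symm {x y : G} (h : Br x y) : Br y x := Eq.symm h

/-- Braid relation in conjugation form. -/
theorem Br.conj {x y : G} (h : Br x y) : x * y * x⁻¹ = y⁻¹ * x * y := by
  unfold Br at h
  have : y * (x * y * x⁻¹) = x * y := by
    calc y * (x * y * x⁻¹) = (y * x * y) * x⁻¹ := by group
      _ = x * y := by rw [← h]; group
  calc x * y * x⁻¹ = y⁻¹ * (y * (x * y * x⁻¹)) := by group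
    _ = _ := by rw [this]; group

theorem br_conj_iff (g x y : G) : Br (g * x * g⁻¹) (g * y * g⁻¹) ↔ Br x y := by
  unfold Br
  rw [show g * x * g⁻¹ * (g * y * g⁻¹) * (g * x * g⁻¹) = g * (x * y * x) * g⁻¹ by group,
    show g * y * g⁻¹ * (g * x * g⁻¹) * (g * y * g⁻¹) = g * (y * x * y) * g⁻¹ by group]
  simp

theorem com_conj_iff (g x y : G) : Commute (g * x * g⁻¹) (g * y * g⁻¹) ↔ Commute x y := by
  unfold Commute SemiconjBy
  rw [show g * x * g⁻¹ * (g * y * g⁻¹) = g * (x * y) * g⁻¹ by group,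
    show g * y * g⁻¹ * (g * x * g⁻¹) = g * (y * x) * g⁻¹ by group]
  simp

theorem com_fix {g x : G} (h : Commute g x) : g * x * g⁻¹ = x := by
  rw [h.eq]; group

/-- The relation rel_4 as a commutation (first generator). -/
theorem rel4_first {p q r : G} (h : Br p q) :
    p * q * r * p = q * r * p * q ↔ Commute p (q * r * q⁻¹) := by
  have e : q * p * q⁻¹ = p⁻¹ * q * p := h.symm.conj
  have e2 : q⁻¹ * p = p * q * p⁻¹ * q⁻¹ := by
    calc q⁻¹ * p = (q⁻¹ * p * q) * q⁻¹ := by group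
      _ = _ := by rw [← h.conj]
  unfold Commute SemiconjBy
  rw [show q * r * q⁻¹ * p = q * r * (q⁻¹ * p) by group, e2,
    ← mul_left_inj (q * p : G) (b := p * (q * r * q⁻¹))]
  rw [show p * (q * r * q⁻¹) * (q * p) = p * q * r * p by group,
    show q * r * (p * q * p⁻¹ * q⁻¹) * (q * p) = q * r * p * q by group]

/-- The relation rel_4 as a commutation (last generator). -/
theorem rel4_last {p q r : G} (h : Br p q) :
    p * q * r * p = q * r * p * q ↔ Commute r (p * q * p⁻¹) := by
  unfold Commute SemiconjBy
  rw [← mul_right_inj (q : G) (b := r * (p * q * p⁻¹)),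
    ← mul_left_inj (p : G) (b := q * (r * (p * q * p⁻¹)))]
  have e := h.conj
  rw [show q * (r * (p * q * p⁻¹)) * p = q * r * p * q by group,
    show q * (p * q * p⁻¹ * r) * p = q * (p * q * p⁻¹) * r * p by group, e,
    show q * (q⁻¹ * p * q) * r * p = p * q * r * p by group]
  exact eq_comm

theorem rel6_A {t u w : G} (tu : Br t u) (uw : Br u w) :
    u * w * t * u * w * t = w * t * u * w * t * u ↔ Br u (w * t * w⁻¹) := by
  unfold Br
  have e1 : w⁻¹ * u * w = u * w * u⁻¹ := uw.conj.symm
  have e2 : u⁻¹ * t * u = t * u * t⁻¹ := tu.conj.symm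
  rw [← mul_left_inj (w * u * t : G) (b := u * (w * t * w⁻¹) * u)]
  rw [show u * (w * t * w⁻¹) * u * (w * u * t) = u * w * t * (w⁻¹ * u * w) * u * t by group,
    show w * t * w⁻¹ * u * (w * t * w⁻¹) * (w * u * t)
      = w * t * (w⁻¹ * u * w) * t * u * t by group, e1,
    show u * w * t * (u * w * u⁻¹) * u * t = u * w * t * u * w * t by group,
    show w * t * (u * w * u⁻¹) * t * u * t = w * t * u * w * (u⁻¹ * t * u) * t by group, e2,
    show w * t * u * w * (t * u * t⁻¹) * t = w * t * u * w * t * u by group]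

theorem rel6_B {t u w : G} (tu : Br t u) (tw : Br t w) (uw : Br u w) :
    t * u * w * t * u * w = u * w * t * u * w * t ↔ Br u (w * t * w⁻¹) := by
  rw [rel6_A (t := w) (u := t) (w := u) tw.symm tu, uw.conj, ← br_conj_iff w,
    show w * (w⁻¹ * u * w) * w⁻¹ = u by group]
  exact ⟨Br.symm, Br.symm⟩

/-- With `x = t⁻¹ w t`. -/
theorem rel6_C {t u w : G} (tu : Br t u) (tw : Br t w) (ux : Br u (t⁻¹ * w * t)) :
    u * w * t * u * w * t = w * t * u * w * t * u ↔ Br u w := by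
  have tx : Br (t⁻¹ * w * t) t := by
    rw [← br_conj_iff t]; simpa [mul_assoc] using tw.symm
  have := rel6_A (t := t⁻¹ * w * t) (u := u) (w := t) ux.symm tu.symm
  rw [show t * (t⁻¹ * w * t) * t⁻¹ = w by group] at this
  rw [← this]
  constructor <;> intro h <;> simpa [mul_assoc] using h

/-- rel_9 in terms of rel_6. -/
theorem rel9 {s t u w : G} (st : Br s t) (tu : Br t u) (su : Commute s u) (sw : Commute s w)
    (z : G) (hz : z = (t * s)⁻¹ * w * (t * s)) :
    u * t * s * z * u * t * s * z * u = t * s * z * u * t * s * z * u * t ↔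
    u * w * t * u * w * t = w * t * u * w * t * u := by
  subst hz
  unfold Br at st tu
  have su' := su.eq
  have sw' := sw.eq
  have e1 : u * t * s * ((t * s)⁻¹ * w * (t * s)) * u * t * s * ((t * s)⁻¹ * w * (t * s)) * u
      = u * w * t * u * w * t * (s * t * u) := by
    calc _ = u * w * t * (s * u) * w * t * s * u := by group
      _ = u * w * t * u * (s * w) * t * s * u := by rw [su']; group
      _ = u * w * t * u * w * (s * t * s) * u := by rw [sw']; group
      _ = _ := by rw [st]; group
  have e2 : t * s * ((t * s)⁻¹ * w * (t * s)) * u * t * s * ((t * s)⁻¹ * w * (t * s)) * u * t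
      = w * t * u * w * t * u * (s * t * u) := by
    calc _ = w * t * (s * u) * w * t * s * u * t := by group
      _ = w * t * u * (s * w) * t * s * u * t := by rw [su']; group
      _ = w * t * u * w * (s * t * s) * u * t := by rw [sw']; group
      _ = w * t * u * w * t * s * (t * u * t) := by rw [st]; group
      _ = w * t * u * w * t * (s * u) * t * u := by rw [tu]; group
      _ = _ := by rw [su']; group
  rw [e1, e2]
  simp only [mul_left_inj]

end helpers

section rel
variable {α : Type*} {rels : Set (FreeGroup α)}

theorem rel_eq {x y : FreeGroup α} (h : x * y⁻¹ ∈ rels) :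
    PresentedGroup.mk rels x = PresentedGroup.mk rels y := by
  have := PresentedGroup.one_of_mem h
  rw [map_mul, map_inv] at this
  exact mul_inv_eq_one.mp this

end rel

/-- The relations of `B₃₃`, in any group. -/
structure Rel33 {G : Type*} [Group G] (a : Fin 5 → G) : Prop where
  h01 : Br (a 0) (a 1)
  h12 : Br (a 1) (a 2)
  h13 : Br (a 1) (a 3)
  h23 : Br (a 2) (a 3)
  h24 : Br (a 2) (a 4)
  h34 : Br (a 3) (a 4)
  h04 : Br (a 0) (a 4)
  c02 : Commute (a 0) (a 2)
  c03 : Commute (a 0) (a 3)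
  c14 : Commute (a 1) (a 4)
  r1 : a 1 * a 2 * a 3 * a 1 = a 2 * a 3 * a 1 * a 2
  r2 : a 2 * a 3 * a 4 * a 2 = a 3 * a 4 * a 2 * a 3
  r3 : a 2 * a 1 * a 0 * a 4 * a 2 * a 1 * a 0 * a 4 * a 2 =
      a 1 * a 0 * a 4 * a 2 * a 1 * a 0 * a 4 * a 2 * a 1

/-- The relations of `B'₃₃`, in any group. -/
structure Rel33' {G : Type*} [Group G] (b : Fin 5 → G) : Prop where
  h01 : Br (b 0) (b 1)
  h12 : Br (b 1) (b 2)
  h23 : Br (b 2) (b 3)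
  h14 : Br (b 1) (b 4)
  h24 : Br (b 2) (b 4)
  c02 : Commute (b 0) (b 2)
  c03 : Commute (b 0) (b 3)
  c04 : Commute (b 0) (b 4)
  c13 : Commute (b 1) (b 3)
  c34 : Commute (b 3) (b 4)
  r : b 1 * b 2 * b 4 * b 1 * b 2 * b 4 = b 2 * b 4 * b 1 * b 2 * b 4 * b 1

theorem rel33_of : Rel33 (PresentedGroup.of (rels := rels33)) := by
  constructor <;> apply rel_eq (rels := rels33)
  · exact Or.inl rfl
  · exact Or.inr (Or.inl rfl)
  · exact Or.inr (Or.inr (Or.inl rfl))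
  · exact Or.inr (Or.inr (Or.inr (Or.inl rfl)))
  · exact Or.inr (Or.inr (Or.inr (Or.inr (Or.inl rfl))))
  · exact Or.inr (Or.inr (Or.inr (Or.inr (Or.inr (Or.inl rfl)))))
  · exact Or.inr (Or.inr (Or.inr (Or.inr (Or.inr (Or.inr (Or.inl rfl))))))
  · exact Or.inr (Or.inr (Or.inr (Or.inr (Or.inr (Or.inr (Or.inr (Or.inl rfl)))))))
  · exact Or.inr (Or.inr (Or.inr (Or.inr (Or.inr (Or.inr (Or.inr (Or.inr (Or.inl rfl))))))))
  · exact Or.inr (Or.inr (Or.inr (Or.inr (Or.inr (Or.inr (Or.inr (Or.inr (Or.inr (Or.inl rfl)))))))))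
  · exact Or.inr (Or.inr (Or.inr (Or.inr (Or.inr (Or.inr (Or.inr (Or.inr (Or.inr (Or.inr (Or.inl rfl))))))))))
  · exact Or.inr (Or.inr (Or.inr (Or.inr (Or.inr (Or.inr (Or.inr (Or.inr (Or.inr (Or.inr (Or.inr (Or.inl rfl)))))))))))
  · exact Or.inr (Or.inr (Or.inr (Or.inr (Or.inr (Or.inr (Or.inr (Or.inr (Or.inr (Or.inr (Or.inr (Or.inr (rfl))))))))))))

theorem rel33'_of : Rel33' (PresentedGroup.of (rels := rels33')) := by
  constructor <;> apply rel_eq (rels := rels33')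
  · exact Or.inl rfl
  · exact Or.inr (Or.inl rfl)
  · exact Or.inr (Or.inr (Or.inl rfl))
  · exact Or.inr (Or.inr (Or.inr (Or.inl rfl)))
  · exact Or.inr (Or.inr (Or.inr (Or.inr (Or.inl rfl))))
  · exact Or.inr (Or.inr (Or.inr (Or.inr (Or.inr (Or.inl rfl)))))
  · exact Or.inr (Or.inr (Or.inr (Or.inr (Or.inr (Or.inr (Or.inl rfl))))))
  · exact Or.inr (Or.inr (Or.inr (Or.inr (Or.inr (Or.inr (Or.inr (Or.inl rfl)))))))
  · exact Or.inr (Or.inr (Or.inr (Or.inr (Or.inr (Or.inr (Or.inr (Or.inr (Or.inl rfl))))))))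
  · exact Or.inr (Or.inr (Or.inr (Or.inr (Or.inr (Or.inr (Or.inr (Or.inr (Or.inr (Or.inl rfl)))))))))
  · exact Or.inr (Or.inr (Or.inr (Or.inr (Or.inr (Or.inr (Or.inr (Or.inr (Or.inr (Or.inr (rfl))))))))))

theorem Rel33.lift {G : Type*} [Group G] {f : Fin 5 → G} (h : Rel33 f) :
    ∀ r ∈ rels33, FreeGroup.lift f r = 1 := by
  intro r hr
  simp only [rels33, Set.mem_insert_iff, Set.mem_singleton_iff] at hr
  rcases hr with rfl | rfl | rfl | rfl | rfl | rfl | rfl | rfl | rfl | rfl | rfl | rfl | rfl <;>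
    rw [map_mul, map_inv, mul_inv_eq_one] <;> simp only [a, map_mul, FreeGroup.lift_apply_of]
  exacts [h.h01, h.h12, h.h13, h.h23, h.h24, h.h34, h.h04, h.c02, h.c03, h.c14, h.r1, h.r2, h.r3]

theorem Rel33'.lift {G : Type*} [Group G] {f : Fin 5 → G} (h : Rel33' f) :
    ∀ r ∈ rels33', FreeGroup.lift f r = 1 := by
  intro r hr
  simp only [rels33', Set.mem_insert_iff, Set.mem_singleton_iff] at hr
  rcases hr with rfl | rfl | rfl | rfl | rfl | rfl | rfl | rfl | rfl | rfl | rfl <;>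
    rw [map_mul, map_inv, mul_inv_eq_one] <;> simp only [b, map_mul, FreeGroup.lift_apply_of]
  exacts [h.h01, h.h12, h.h23, h.h14, h.h24, h.c02, h.c03, h.c04, h.c13, h.c34, h.r]

/-- The forward assignment. -/
def fwd {G : Type*} [Group G] (a : Fin 5 → G) : Fin 5 → G :=
  ![a 0, a 1, a 2, a 2 * a 3 * (a 2)⁻¹, (a 1 * a 0) * a 4 * (a 1 * a 0)⁻¹]

/-- The backward assignment. -/
def bwd {G : Type*} [Group G] (b : Fin 5 → G) : Fin 5 → G :=
  ![b 0, b 1, b 2, (b 2)⁻¹ * b 3 * b 2, (b 1 * b 0)⁻¹ * b 4 * (b 1 * b 0)]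

theorem Rel33.fwd {G : Type*} [Group G] {a : Fin 5 → G} (h : Rel33 a) : Rel33' (fwd a) := by
  obtain ⟨h01, h12, h13, h23, h24, h34, h04, c02, c03, c14, r1, r2, r3⟩ := h
  generalize hs : a 0 = s at *
  generalize ht : a 1 = t at *
  generalize hu : a 2 = u at *
  generalize hp : a 3 = p at *
  generalize hz : a 4 = z at *
  have c1v : Commute t (u * p * u⁻¹) := (rel4_first h12).1 r1
  have czv : Commute z (u * p * u⁻¹) := (rel4_last h23).1 r2
  have csv : Commute s (u * p * u⁻¹) := (c02.mul_right c03).mul_right c02.inv_right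
  have csw : Commute s (t * s * z * (t * s)⁻¹) := by
    have : s = (t * s) * t * (t * s)⁻¹ := by
      have := h01; unfold Br at this
      rw [← this]; group
    have h2 := (com_conj_iff (t * s) t z).2 c14
    rwa [← this] at h2
  have btw : Br t (t * s * z * (t * s)⁻¹) := by
    rw [← br_conj_iff t⁻¹]
    rw [show t⁻¹ * t * t⁻¹⁻¹ = t by group,
      show t⁻¹ * (t * s * z * (t * s)⁻¹) * t⁻¹⁻¹ = s * z * s⁻¹ by group, h04.conj,
      ← br_conj_iff z, com_fix c14.symm, show z * (z⁻¹ * s * z) * z⁻¹ = s by group]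
    exact h01.symm
  have bux : Br u (t⁻¹ * (t * s * z * (t * s)⁻¹) * t) := by
    rw [show t⁻¹ * (t * s * z * (t * s)⁻¹) * t = s * z * s⁻¹ by group,
      ← com_fix c02, br_conj_iff]
    exact h24
  have r6 := (rel9 h01 h12 c02 csw z (by group)).1 r3
  have buw := (rel6_C h12 btw bux).1 r6
  constructor <;> simp only [G33Presentation.fwd, hs, ht, hu, hp, hz, Matrix.cons_val]
  · exact h01
  · exact h12
  · have := (br_conj_iff u u p).2 h23
    rwa [show u * u * u⁻¹ = u by group] at this
  · exact btw
  · exact buw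
  · exact c02
  · exact csv
  · exact csw
  · exact c1v
  · have hts := c1v.mul_left csv
    exact ((hts.mul_left czv).mul_left hts.inv_left).symm
  · exact (rel6_B h12 btw buw).2 ((rel6_A h12 buw).1 r6)

theorem Rel33'.bwd {G : Type*} [Group G] {b : Fin 5 → G} (h : Rel33' b) : Rel33 (bwd b) := by
  obtain ⟨h01, h12, h23, h14, h24, c02, c03, c04, c13, c34, r⟩ := h
  generalize hs : b 0 = s at *
  generalize ht : b 1 = t at *
  generalize hu : b 2 = u at *
  generalize hv : b 3 = v at *
  generalize hw : b 4 = w at *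
  have hy := (rel6_B h12 h14 h24).1 r
  have r6 := (rel6_A h12 h24).2 hy
  have bux : Br u (t⁻¹ * w * t) := by
    rw [h14.symm.conj] at hy; exact hy
  have ep : u⁻¹ * v * u = v * u * v⁻¹ := h23.symm.conj.symm
  obtain ⟨z, hz⟩ : ∃ z, z = (t * s)⁻¹ * w * (t * s) := ⟨_, rfl⟩
  have ez : z = s⁻¹ * (t⁻¹ * w * t) * s := by rw [hz]; group
  have buz : Br u z := by
    rw [← br_conj_iff s, com_fix c02, ez]
    rwa [show s * (s⁻¹ * (t⁻¹ * w * t) * s) * s⁻¹ = t⁻¹ * w * t by group]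
  have cvt := c13.symm.mul_right c03.symm
  have cvz : Commute v z := by
    rw [hz]; exact (cvt.inv_right.mul_right c34).mul_right cvt
  have bup : Br u (u⁻¹ * v * u) := by
    rw [← br_conj_iff u]
    rw [show u * u * u⁻¹ = u by group, show u * (u⁻¹ * v * u) * u⁻¹ = v by group]
    exact h23
  have ev : u * (u⁻¹ * v * u) * u⁻¹ = v := by group
  constructor <;> simp only [G33Presentation.bwd, hs, ht, hu, hv, hw, Matrix.cons_val, ← hz]
  · exact h01
  · exact h12
  · rw [ep, ← com_fix c13.symm, br_conj_iff]; exact h12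
  · exact bup
  · exact buz
  · rw [ep, ← com_fix cvz, br_conj_iff]; exact buz
  · rw [← br_conj_iff (t * s), hz, show t * s * ((t * s)⁻¹ * w * (t * s)) * (t * s)⁻¹ = w by group,
      show t * s * s * (t * s)⁻¹ = t * s * t⁻¹ by group, h01.symm.conj, ← br_conj_iff s,
      com_fix c04, show s * (s⁻¹ * t * s) * s⁻¹ = t by group]
    exact h14
  · exact c02
  · exact (c02.inv_right.mul_right c03).mul_right c02
  · rw [← com_conj_iff (t * s), hz,
      show t * s * ((t * s)⁻¹ * w * (t * s)) * (t * s)⁻¹ = w by group,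
      show t * s * t * (t * s)⁻¹ = s by
        have := h01; unfold Br at this
        rw [← this]; group]
    exact c04
  · rw [rel4_first h12, ev]; exact c13
  · rw [rel4_last bup, ev]; exact cvz.symm
  · exact (rel9 h01 h12 c02 c04 z hz).2 r6

theorem B33_iso :
    ∃ e : PresentedGroup rels33' ≃* PresentedGroup rels33,
      e (PresentedGroup.of 0) = A 0 ∧
      e (PresentedGroup.of 1) = A 1 ∧
      e (PresentedGroup.of 2) = A 2 ∧
      e (PresentedGroup.of 3) = A 2 * A 3 * (A 2)⁻¹ ∧
      e (PresentedGroup.of 4) = (A 1 * A 0) * A 4 * (A 1 * A 0)⁻¹ := by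
  let f : PresentedGroup rels33' →* PresentedGroup rels33 :=
    PresentedGroup.toGroup rel33_of.fwd.lift
  let g : PresentedGroup rels33 →* PresentedGroup rels33' :=
    PresentedGroup.toGroup rel33'_of.bwd.lift
  have hf : ∀ i, f (PresentedGroup.of i) = fwd PresentedGroup.of i :=
    fun i => PresentedGroup.toGroup.of _
  have hg : ∀ i, g (PresentedGroup.of i) = bwd PresentedGroup.of i :=
    fun i => PresentedGroup.toGroup.of _
  refine ⟨MonoidHom.toMulEquiv f g ?_ ?_, hf 0, hf 1, hf 2, hf 3, hf 4⟩
  · apply PresentedGroup.ext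
    intro i
    fin_cases i <;> simp [hf, hg, fwd, bwd] <;> group
  · apply PresentedGroup.ext
    intro i
    fin_cases i <;> simp [hf, hg, fwd, bwd] <;> group

end G33Presentation
end

section
/- Let B₃₄ be the group presented by generators a_1,…,a_6 and relations: braids a_1a_2a_1 = a_2a_1a_2, a_2a_3a_2 = a_3a_2a_3, a_2a_4a_2 = a_4a_2a_4, a_3a_4a_3 = a_4a_3a_4, a_3a_5a_3 = a_5a_3a_5, a_4a_5a_4 = a_5a_4a_5, a_1a_5a_1 = a_5a_1a_5, a_6a_1a_6 = a_1a_6a_1, a_6a_2a_6 = a_2a_6a_2, a_6a_3a_6 = a_3a_6a_3; commutations a_1a_3 = a_3a_1, a_1a_4 = a_4a_1, a_2a_5 = a_5a_2, a_6a_4 = a_4a_6, a_6a_5 = a_5a_6; and the cycle relations rel_4(a_2,a_3,a_4), rel_4(a_3,a_4,a_5), rel_9(a_3,a_2,a_1,a_5), rel_4(a_2,a_1,a_6), rel_4(a_2,a_3,a_6), rel_9(a_1,a_5,a_3,a_6). Let B'₃₄ be the group presented by generators s,t,u,v,w,x and relations: braids sts = tst, tut = utu, uvu = vuv, twt = wtw,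 uwu = wuw, xvx = vxv; commutations su = us, sv = vs, sw = ws, tv = vt, vw = wv, xs = sx, xt = tx, xu = ux, xw = wx; and rel_6(t,u,w): tuwtuw = uwtuwt (the known presentation of the braid group of the unitary reflection group G₃₄). Then the assignment s ↦ a_1, t ↦ a_2, u ↦ a_3, v ↦ a_3a_4a_3⁻¹, w ↦ (a_2a_1)a_5(a_2a_1)⁻¹, x ↦ (a_4a_2a_1a_5a_3)a_6(a_4a_2a_1a_5a_3)⁻¹ extends to a group isomorphism from B'₃₄ onto B₃₄. -/
/- The new presentation B₃₄ (on the diagram D₃₄) and the known presentation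
   B'₃₄ of the braid group of the unitary reflection group G₃₄ are equivalent:
   s ↦ a₁, t ↦ a₂, u ↦ a₃, v ↦ a₃a₄a₃⁻¹, w ↦ (a₂a₁)a₅(a₂a₁)⁻¹,
   x ↦ (a₄a₂a₁a₅a₃)a₆(a₄a₂a₁a₅a₃)⁻¹ extends to an isomorphism B'₃₄ ≃ B₃₄.
   Generators a₁,…,a₆ are indexed by 0,…,5, and likewise s,t,u,v,w,x. -/

namespace G34Presentation

/-- `a i` is the free group generator corresponding to `a_{i+1}`. -/
def a (i : Fin 6) : FreeGroup (Fin 6) := FreeGroup.of i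

/-- Relations of the presentation `B₃₄` on the diagram `D₃₄`. -/
def rels34 : Set (FreeGroup (Fin 6)) :=
  { a 0 * a 1 * a 0 * (a 1 * a 0 * a 1)⁻¹,
    a 1 * a 2 * a 1 * (a 2 * a 1 * a 2)⁻¹,
    a 1 * a 3 * a 1 * (a 3 * a 1 * a 3)⁻¹,
    a 2 * a 3 * a 2 * (a 3 * a 2 * a 3)⁻¹,
    a 2 * a 4 * a 2 * (a 4 * a 2 * a 4)⁻¹,
    a 3 * a 4 * a 3 * (a 4 * a 3 * a 4)⁻¹,
    a 0 * a 4 * a 0 * (a 4 * a 0 * a 4)⁻¹,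
    a 5 * a 0 * a 5 * (a 0 * a 5 * a 0)⁻¹,
    a 5 * a 1 * a 5 * (a 1 * a 5 * a 1)⁻¹,
    a 5 * a 2 * a 5 * (a 2 * a 5 * a 2)⁻¹,
    a 0 * a 2 * (a 2 * a 0)⁻¹,
    a 0 * a 3 * (a 3 * a 0)⁻¹,
    a 1 * a 4 * (a 4 * a 1)⁻¹,
    a 5 * a 3 * (a 3 * a 5)⁻¹,
    a 5 * a 4 * (a 4 * a 5)⁻¹,
    a 1 * a 2 * a 3 * a 1 * (a 2 * a 3 * a 1 * a 2)⁻¹,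
    a 2 * a 3 * a 4 * a 2 * (a 3 * a 4 * a 2 * a 3)⁻¹,
    a 2 * a 1 * a 0 * a 4 * a 2 * a 1 * a 0 * a 4 * a 2 *
      (a 1 * a 0 * a 4 * a 2 * a 1 * a 0 * a 4 * a 2 * a 1)⁻¹,
    a 1 * a 0 * a 5 * a 1 * (a 0 * a 5 * a 1 * a 0)⁻¹,
    a 1 * a 2 * a 5 * a 1 * (a 2 * a 5 * a 1 * a 2)⁻¹,
    a 0 * a 4 * a 2 * a 5 * a 0 * a 4 * a 2 * a 5 * a 0 *
      (a 4 * a 2 * a 5 * a 0 * a 4 * a 2 * a 5 * a 0 * a 4)⁻¹ }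

/-- `b 0,…,b 5` are the free group generators `s, t, u, v, w, x`. -/
def b (i : Fin 6) : FreeGroup (Fin 6) := FreeGroup.of i

/-- Relations of the known presentation `B'₃₄` of `Braid(G₃₄)`. -/
def rels34' : Set (FreeGroup (Fin 6)) :=
  { b 0 * b 1 * b 0 * (b 1 * b 0 * b 1)⁻¹,
    b 1 * b 2 * b 1 * (b 2 * b 1 * b 2)⁻¹,
    b 2 * b 3 * b 2 * (b 3 * b 2 * b 3)⁻¹,
    b 1 * b 4 * b 1 * (b 4 * b 1 * b 4)⁻¹,
    b 2 * b 4 * b 2 * (b 4 * b 2 * b 4)⁻¹,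
    b 5 * b 3 * b 5 * (b 3 * b 5 * b 3)⁻¹,
    b 0 * b 2 * (b 2 * b 0)⁻¹,
    b 0 * b 3 * (b 3 * b 0)⁻¹,
    b 0 * b 4 * (b 4 * b 0)⁻¹,
    b 1 * b 3 * (b 3 * b 1)⁻¹,
    b 3 * b 4 * (b 4 * b 3)⁻¹,
    b 5 * b 0 * (b 0 * b 5)⁻¹,
    b 5 * b 1 * (b 1 * b 5)⁻¹,
    b 5 * b 2 * (b 2 * b 5)⁻¹,
    b 5 * b 4 * (b 4 * b 5)⁻¹,
    b 1 * b 2 * b 4 * b 1 * b 2 * b 4 * (b 2 * b 4 * b 1 * b 2 * b 4 * b 1)⁻¹ }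

/-- `A i` is the image of `a i` in `B₃₄`. -/
def A (i : Fin 6) : PresentedGroup rels34 := PresentedGroup.of i

section Aux
variable {G : Type*} [Group G]

/-- The braid relation. -/
def Br (x y : G) : Prop := x * y * x = y * x * y

/-- Conjugation. -/
def K (g x : G) : G := g * x * g⁻¹

theorem Br.sy {x y : G} (h : Br x y) : Br y x := Eq.symm h

theorem K_mul (g h x : G) : K (g * h) x = K g (K h x) := by simp [K, mul_assoc]
theorem K_inv_K (g x : G) : K g⁻¹ (K g x) = x := by simp [K, mul_assoc]
theorem K_K_inv (g x : G) : K g (K g⁻¹ x) = x := by simp [K, mul_assoc]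
theorem K_of_comm {g x : G} (h : Commute g x) : K g x = x := by
  unfold K; rw [h.eq]; simp
theorem K_of_br {g x : G} (h : Br g x) : K g x = K x⁻¹ g := by
  unfold K Br at *
  rw [mul_inv_eq_iff_eq_mul, inv_inv]
  simp only [mul_assoc] at *
  rw [eq_inv_mul_iff_mul_eq, h]
theorem K_swap {g h : G} (c : Commute g h) (x : G) : K g (K h x) = K h (K g x) := by
  rw [← K_mul, ← K_mul, c.eq]
theorem comm_KK (g x y : G) : Commute (K g x) (K g y) ↔ Commute x y := by
  have e : K g x * K g y = g * (x * y) * g⁻¹ := by simp [K, mul_assoc]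
  have f : K g y * K g x = g * (y * x) * g⁻¹ := by simp [K, mul_assoc]
  unfold Commute SemiconjBy
  rw [e, f, mul_left_inj, mul_right_inj]
theorem br_KK (g x y : G) : Br (K g x) (K g y) ↔ Br x y := by
  have e : K g x * K g y * K g x = g * (x * y * x) * g⁻¹ := by simp [K, mul_assoc]
  have f : K g y * K g x * K g y = g * (y * x * y) * g⁻¹ := by simp [K, mul_assoc]
  unfold Br
  rw [e, f, mul_left_inj, mul_right_inj]
theorem comm_K (g x y : G) : Commute x (K g y) ↔ Commute (K g⁻¹ x) y := by
  rw [← comm_KK g (K g⁻¹ x) y, K_K_inv]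
theorem br_K (g x y : G) : Br x (K g y) ↔ Br (K g⁻¹ x) y := by
  rw [← br_KK g (K g⁻¹ x) y, K_K_inv]
theorem br_K_comm {g x y : G} (h : Commute g x) : Br x (K g y) ↔ Br x y := by
  rw [br_K, K_of_comm h.inv_left]
theorem comm_K_comm {g x y : G} (h : Commute g x) : Commute x (K g y) ↔ Commute x y := by
  rw [comm_K, K_of_comm h.inv_left]
theorem comm_K' {g x y : G} (h : Commute x g) (k : Commute x y) : Commute x (K g y) :=
  (comm_K_comm h.symm).2 k
theorem br_K_self (x y : G) : Br x (K x y) ↔ Br x y := br_K_comm (Commute.refl x)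

theorem rel4_iff {a b c : G} (ab : Br a b) :
    a * b * c * a = b * c * a * b ↔ Commute a (K b c) := by
  have e : a * (K b c) * (b * a) = a * b * c * a := by simp [K, mul_assoc]
  have f : K b c * a * (b * a) = b * c * a * b := by
    unfold Br at ab
    have : K b c * a * (b * a) = K b c * (a * b * a) := by simp only [mul_assoc]
    rw [this, ab]; simp [K, mul_assoc]
  rw [← e, ← f, mul_left_inj]; rfl

theorem comm_cyc {a b c : G} (bc : Br b c) (h : Commute a (K b c)) : Commute b (K c a) := by
  rw [K_of_br bc, comm_K, inv_inv] at h
  exact h.symm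

theorem rel6_iff {t u w : G} (tu : Br t u) (tw : Br t w) :
    t * u * w * t * u * w = u * w * t * u * w * t ↔ Br u (K t⁻¹ w) := by
  obtain ⟨y, hy⟩ : ∃ y, y = K t⁻¹ w := ⟨_, rfl⟩
  have h1 : w * t = t * y := by rw [hy]; simp [K, mul_assoc]
  have h2 : w * t = y * w := by
    rw [hy, ← K_of_br tw.sy]; simp [K, mul_assoc]
  rw [← hy]
  have e : t * u * w * t * u * w = u * t * (u * y * u) * w := by
    calc _ = t * u * (w * t) * u * w := by simp only [mul_assoc]
      _ = (t * u * t) * y * u * w := by rw [h1]; simp only [mul_assoc]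
      _ = _ := by rw [show t * u * t = u * t * u from tu]; simp only [mul_assoc]
  have f : u * w * t * u * w * t = u * t * (y * u * y) * w := by
    calc _ = u * (w * t) * u * (w * t) := by simp only [mul_assoc]
      _ = u * (t * y) * u * (y * w) := by rw [← h2, h1]
      _ = _ := by simp only [mul_assoc]
  rw [e, f, mul_left_inj, mul_right_inj]; rfl

theorem rel9_iff {u t s a : G} (ts : Br t s) (us : Commute u s) (ta : Commute t a)
    (sa : Br s a) (ut : Br u t) (ua : Br u a) :
    u * t * s * a * u * t * s * a * u = t * s * a * u * t * s * a * u * t ↔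
      Br u (K t (K s a)) := by
  obtain ⟨y, hy⟩ : ∃ y, y = K s a := ⟨_, rfl⟩
  obtain ⟨w, hw⟩ : ∃ w, w = K t y := ⟨_, rfl⟩
  have uy : Br u y := by rw [hy]; exact (br_K_comm us.symm).2 ua
  have sw : s * w = w * s := by
    have : Commute s (K (t * s) a) := by
      rw [comm_K]
      have : K (t * s)⁻¹ s = t := by
        rw [mul_inv_rev, K_mul, ← K_of_br ts.sy, K_inv_K]
      rw [this]; exact ta
    rw [hw, hy, ← K_mul]; exact this
  have us' : s * u = u * s := us.symm
  have h0 : t * s * a = w * t * s := by rw [hw, hy]; simp [K, mul_assoc]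
  have h1 : w * t = t * y := by rw [hw]; simp [K, mul_assoc]
  have ts' : s * t * s = t * s * t := ts.symm
  have e : u * t * s * a * u * t * s * a * u = u * w * t * u * w * t * (s * t * u) := by
    calc _ = u * (t * s * a) * u * (t * s * a) * u := by simp only [mul_assoc]
      _ = u * w * t * (s * u) * w * t * s * u := by rw [h0]; simp only [mul_assoc]
      _ = u * w * t * u * (s * w) * t * s * u := by rw [us']; simp only [mul_assoc]
      _ = u * w * t * u * w * (s * t * s) * u := by rw [sw]; simp only [mul_assoc]
      _ = _ := by rw [ts']; simp only [mul_assoc]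
  have f : t * s * a * u * t * s * a * u * t = w * t * u * w * t * u * (s * t * u) := by
    calc _ = (t * s * a) * u * (t * s * a) * u * t := by simp only [mul_assoc]
      _ = w * t * (s * u) * w * t * s * u * t := by rw [h0]; simp only [mul_assoc]
      _ = w * t * u * (s * w) * t * s * u * t := by rw [us']; simp only [mul_assoc]
      _ = w * t * u * w * (s * t * s) * u * t := by rw [sw]; simp only [mul_assoc]
      _ = w * t * u * w * t * s * (t * u * t) := by rw [ts']; simp only [mul_assoc]
      _ = w * t * u * w * t * (s * u) * t * u := by
        rw [← show u * t * u = t * u * t from ut]; simp only [mul_assoc]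
      _ = _ := by rw [us']; simp only [mul_assoc]
  have e' : u * w * t * u * w * t = u * w * u * (t * u * y) := by
    calc _ = u * w * t * u * (w * t) := by simp only [mul_assoc]
      _ = u * w * (t * u * t) * y := by rw [h1]; simp only [mul_assoc]
      _ = _ := by rw [← show u * t * u = t * u * t from ut]; simp only [mul_assoc]
  have f' : w * t * u * w * t * u = w * u * w * (t * u * y) := by
    calc _ = w * t * u * (w * t) * u := by simp only [mul_assoc]
      _ = w * (t * u * t) * y * u := by
        have h := congrArg (fun k => w * t * u * k * u) h1
        simpa only [mul_assoc] using h
      _ = w * u * t * (u * y * u) := by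
        rw [← show u * t * u = t * u * t from ut]; simp only [mul_assoc]
      _ = w * u * (t * y) * u * y := by rw [show u * y * u = y * u * y from uy]; simp only [mul_assoc]
      _ = w * u * (w * t) * u * y := by rw [h1]
      _ = _ := by simp only [mul_assoc]
  rw [e, f, mul_left_inj, e', f', mul_left_inj, ← hy, ← hw]; rfl

theorem br4_cyc {a b c d : G} (ad : Br a d) (bd : Commute b d) (cd : Br c d)
    (h : Br a (K b (K c d))) : Br d (K a (K b c)) := by
  rw [K_of_br cd, K_swap bd.inv_right, br_K, inv_inv, K_of_br ad.sy] at h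
  rw [br_K]; exact h

/-- Relations among the first five generators, in conjugation form. -/
structure C5 (s t u p r : G) : Prop where
  st : Br s t
  tu : Br t u
  tp : Br t p
  up : Br u p
  ur : Br u r
  pr : Br p r
  sr : Br s r
  su : Commute s u
  sp : Commute s p
  tr : Commute t r
  tv : Commute t (K u p)
  rv : Commute r (K u p)
  uw : Br u (K t (K s r))

namespace C5
variable {s t u p r : G} (H : C5 s t u p r)
include H

theorem sv : Commute s (K u p) := comm_K' H.su H.sp
theorem pv : Br p (K u p) := by
  rw [K_of_br H.up, br_K_comm (Commute.refl p).inv_left]; exact H.up.sy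
theorem q_eq : K p (K t s) = K s⁻¹ (K t⁻¹ p) := by
  rw [K_of_br H.st.sy, K_swap H.sp.symm.inv_right, K_of_br H.tp.sy]
theorem uq : Commute u (K p (K t s)) := by
  rw [H.q_eq]
  refine comm_K' H.su.symm.inv_right ?_
  rw [← K_of_br H.tp.sy]
  exact comm_cyc H.up H.tv
theorem vw : Commute (K u p) (K t (K s r)) :=
  comm_K' H.tv.symm (comm_K' H.sv.symm H.rv.symm)
theorem uv : Br u (K u p) := (br_K_self _ _).2 H.up
theorem rq : Br r (K p (K t s)) := by
  have h : Br (K t (K s r)) (K (K u p) u) := (br_K_comm H.vw).2 H.uw.sy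
  rw [K_of_br H.uv.sy, K_inv_K] at h
  rw [H.q_eq, br_K, br_K, inv_inv, inv_inv]; exact h
theorem es : K (p * t * s * r * u) (K t u) = s := by
  simp only [K_mul]
  rw [K_of_br H.tu, K_K_inv, K_of_comm H.tr.symm, K_of_br H.st, K_K_inv, K_of_comm H.sp.symm]
theorem et : K (p * t * s * r * u) (K r⁻¹ p) = t := by
  simp only [K_mul]
  have h : Commute u (K r⁻¹ p) := by
    rw [← K_of_br H.pr]
    have := comm_cyc H.up H.rv
    exact this
  rw [K_of_comm h, K_K_inv, K_of_comm H.sp, K_of_br H.tp, K_K_inv]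
theorem eu : K (p * t * s * r * u) p = u := by
  simp only [K_mul]
  rw [K_of_comm H.rv, K_of_comm H.sv, K_of_comm H.tv, K_of_br H.up, K_K_inv]
theorem ew : K (p * t * s * r * u) (K p (K t s)) = K t (K s r) := by
  rw [K_mul, K_of_comm H.uq, K_mul, K_of_br H.rq, H.q_eq, ← K_mul, ← K_mul]
  simp [K, mul_assoc]
theorem ev : K (p * t * s * r * u) (K p (K (K p (K t s)) (K r u))) = K u p := by
  rw [K_of_br H.ur.sy, K_swap H.uq.symm.inv_right, K_of_br H.rq.sy]
  have e : p * t * s * r * u * p * u⁻¹ * r⁻¹ = p * K u p * (t * s) := by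
    have h : Commute (t * s * r) (K u p) := (H.tv.mul_left H.sv).mul_left H.rv
    calc _ = p * ((t * s * r) * K u p) * r⁻¹ := by simp [K, mul_assoc]
      _ = _ := by rw [h.eq]; simp [mul_assoc]
  rw [← K_mul, ← K_mul, ← K_mul, e, H.q_eq, K_mul, K_mul, K_mul t s, K_K_inv, K_K_inv,
    K_of_br H.pv.sy, K_K_inv]
end C5

/-- Relations of the first presentation. -/
structure RA (s t u p r z : G) : Prop extends C5 s t u p r where
  zs : Br z s
  zt : Br z t
  zu : Br z u
  zp : Commute z p
  zr : Commute z r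
  z21 : Commute z (K t s)
  z23 : Commute z (K t u)
  b9 : Br s (K r (K u z))

/-- Relations of the second presentation. -/
structure RB (s t u v w x : G) : Prop where
  st : Br s t
  tu : Br t u
  uv : Br u v
  tw : Br t w
  uw : Br u w
  xv : Br x v
  su : Commute s u
  sv : Commute s v
  sw : Commute s w
  tv : Commute t v
  vw : Commute v w
  xs : Commute x s
  xt : Commute x t
  xu : Commute x u
  xw : Commute x w
  r6 : Br u (K t⁻¹ w)

theorem conj_ts {s t : G} (st : Br s t) : K (t * s) t = s := by
  rw [K_mul, K_of_br st, K_K_inv]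
theorem conj_ts' {s t : G} (st : Br s t) : K t (K s t) = s := by
  rw [K_of_br st, K_K_inv]

theorem RA.toRB {s t u p r z : G} (H : RA s t u p r z) :
    RB s t u (K u p) (K t (K s r)) (K (p * t * s * r * u) z) where
  st := H.st
  tu := H.tu
  uv := H.uv
  tw := by rw [br_K_self]; exact (by rw [K_of_br H.sr, br_K_comm H.tr.symm.inv_left]; exact H.st.sy)
  uw := H.uw
  xv := by
    rw [← H.ev, br_KK, br_K_comm H.zp.symm, br_K_comm, br_K_comm H.zr.symm]
    · exact H.zu
    · exact (comm_K' H.zp H.z21).symm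
  su := H.su
  sv := H.sv
  sw := by
    have := (comm_KK (t * s) t r).2 H.tr
    rwa [conj_ts H.st, K_mul] at this
  tv := H.tv
  vw := H.vw
  xs := by have := (comm_KK (p * t * s * r * u) _ _).2 H.z23; rwa [H.es] at this
  xt := by
    have := (comm_KK (p * t * s * r * u) _ _).2 (comm_K' H.zr.inv_right H.zp); rwa [H.et] at this
  xu := by have := (comm_KK (p * t * s * r * u) _ _).2 H.zp; rwa [H.eu] at this
  xw := by
    have := (comm_KK (p * t * s * r * u) _ _).2 (comm_K' H.zp H.z21); rwa [H.ew] at this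
  r6 := by rw [K_inv_K, br_K_comm H.su]; exact H.ur

theorem RB.toC5 {s t u p r x : G} (H : RB s t u (K u p) (K t (K s r)) x) : C5 s t u p r := by
  have up : Br u p := (br_K_self _ _).1 H.uv
  have sp : Commute s p := (comm_K_comm H.su.symm).1 H.sv
  have tr : Commute t r := by
    have := H.sw
    rw [← comm_KK (t * s), conj_ts H.st, K_mul]; exact this
  have ur : Br u r := by
    have := H.r6
    rwa [K_inv_K, br_K_comm H.su] at this
  have sr : Br s r := by
    have := (br_K_self _ _).1 H.tw
    rw [br_K, ← K_of_br H.st.sy, ← br_KK t⁻¹, K_inv_K, K_of_comm tr.inv_left] at this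
    exact this
  have rv : Commute r (K u p) := by
    have := H.vw
    rw [comm_K_comm H.tv, comm_K_comm H.sv] at this
    exact this.symm
  have pe : K (K u p) u = p := by rw [K_of_br H.uv.sy, K_inv_K]
  have tp : Br t p := by rw [← pe, br_K_comm H.tv.symm]; exact H.tu
  have pr : Br p r := by
    have : Br r p := by rw [← pe, br_K_comm rv.symm]; exact ur.sy
    exact this.sy
  exact ⟨H.st, H.tu, tp, up, ur, pr, sr, H.su, sp, tr, H.tv, rv, H.uw⟩

theorem RB.toRA {s t u p r z : G}
    (H : RB s t u (K u p) (K t (K s r)) (K (p * t * s * r * u) z)) : RA s t u p r z := by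
  have C := H.toC5
  have z23 : Commute z (K t u) := by
    rw [← comm_KK (p * t * s * r * u), C.es]; exact H.xs
  have h1 : Commute z (K r⁻¹ p) := by
    rw [← comm_KK (p * t * s * r * u), C.et]; exact H.xt
  have zp : Commute z p := by
    rw [← comm_KK (p * t * s * r * u), C.eu]; exact H.xu
  have h2 : Commute z (K p (K t s)) := by
    rw [← comm_KK (p * t * s * r * u), C.ew]; exact H.xw
  have h3 : Br z (K p (K (K p (K t s)) (K r u))) := by
    rw [← br_KK (p * t * s * r * u), C.ev]; exact H.xv
  have z21 : Commute z (K t s) := (comm_K_comm zp.symm).1 h2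
  have zr : Commute z r := by
    rw [← K_of_br C.pr] at h1
    exact (comm_K_comm zp.symm).1 h1
  have zu : Br z u := by
    rwa [br_K_comm zp.symm, br_K_comm h2.symm, br_K_comm zr.symm] at h3
  have step : ∀ {m n : G}, Br m n → Commute z (K m n) → Br z n → Br z m := by
    intro m n mn c b
    have e : K (K m n) m = n := by
      rw [K_of_br ((br_K_self _ _).2 mn).sy, K_inv_K]
    rw [← br_K_comm c.symm, e]; exact b
  have zt : Br z t := step C.tu z23 zu
  have zs : Br z s := by
    have e : K (K t s) t = s := by
      rw [K_of_br ((br_K_self _ _).2 C.st.sy).sy, K_inv_K]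
    rw [← e, br_K_comm z21.symm]; exact zt
  refine { C with zs := zs, zt := zt, zu := zu, zp := zp, zr := zr, z21 := z21, z23 := z23, b9 := ?_ }
  -- `y = t⁻¹ z t` commutes with `u`, `s`, `r`
  have yu : Commute (K t⁻¹ z) u := by rw [← comm_K]; exact z23
  have ys : Commute (K t⁻¹ z) s := by rw [← comm_K]; exact z21
  have yr : Commute (K t⁻¹ z) r := (comm_K' C.tr.symm.inv_right zr.symm).symm
  -- rotate the 4-cycle
  have c1 : Br r (K u (K t s)) := br4_cyc C.ur C.tr C.sr C.uw
  have c2 : Br s (K r (K u t)) := br4_cyc C.sr.sy C.su.symm C.st.sy c1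
  have c3 : Br t (K s (K r u)) := br4_cyc C.st C.tr.symm C.tu.sy c2
  have yX : Commute (K t⁻¹ z) (K s (K r u)) := comm_K' ys (comm_K' yr yu)
  have c4 : Br (K s (K r u)) z := by
    have e : K (K t⁻¹ z)⁻¹ t = z := by
      rw [← K_of_br, K_K_inv]
      rw [br_K_comm (Commute.refl t).inv_left]; exact zt.sy
    rw [← e, br_K_comm yX.inv_left]; exact c3.sy
  have c5 : Br u (K z (K s r)) := br4_cyc zu C.su C.ur.sy c4.sy
  have c6 : Br r (K u (K z s)) := br4_cyc C.ur zr C.sr c5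
  exact br4_cyc C.sr.sy C.su.symm zs c6

end Aux


theorem lift_rels {G : Type*} [Group G] (f : Fin 6 → G) :
    (∀ r ∈ rels34, FreeGroup.lift f r = 1) ↔ RA (f 0) (f 1) (f 2) (f 3) (f 4) (f 5) := by
  simp only [rels34, Set.mem_insert_iff, Set.mem_singleton_iff, forall_eq_or_imp, forall_eq, a,
    map_mul, map_inv, FreeGroup.lift_apply_of, mul_inv_eq_one]
  constructor
  · rintro ⟨h1, h2, h3, h4, h5, h6, h7, h8, h9, h10, c1, c2, c3, c4, c5, r1, r2, r3, r4, r5, r6⟩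
    have r1' := (rel4_iff h2).1 r1
    have r2' := comm_cyc (Br.sy h5) (comm_cyc h6 ((rel4_iff h4).1 r2))
    have r3' := (rel9_iff (Br.sy h1) (Commute.symm c1) c3 h7 (Br.sy h2) h5).1 r3
    have r4' := comm_cyc (Br.sy h9 |> Br.sy) (comm_cyc (Br.sy h8) ((rel4_iff (Br.sy h1)).1 r4))
    have r5' := comm_cyc (Br.sy h9 |> Br.sy) (comm_cyc (Br.sy h10) ((rel4_iff h2).1 r5))
    have r6' := (rel9_iff (Br.sy h5) c1 (Commute.symm c5) (Br.sy h10) h7 (Br.sy h8)).1 r6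
    exact ⟨⟨h1, h2, h3, h4, h5, h6, h7, c1, c2, c3, r1', r2', r3'⟩, h8, h9, h10, c4, c5,
      r4', r5', r6'⟩
  · intro H
    refine ⟨H.st, H.tu, H.tp, H.up, H.ur, H.pr, H.sr, H.zs, H.zt, H.zu, H.su, H.sp, H.tr, H.zp,
      H.zr, (rel4_iff H.tu).2 H.tv, (rel4_iff H.up).2 (comm_cyc H.up H.rv),
      (rel9_iff H.st.sy H.su.symm H.tr H.sr H.tu.sy H.ur).2 H.uw,
      (rel4_iff H.st.sy).2 (comm_cyc H.st.sy H.z21),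
      (rel4_iff H.tu).2 (comm_cyc H.tu H.z23),
      (rel9_iff H.ur.sy H.su H.zr.symm H.zu.sy H.sr H.zs.sy).2 H.b9⟩

theorem lift_rels' {G : Type*} [Group G] (f : Fin 6 → G) :
    (∀ r ∈ rels34', FreeGroup.lift f r = 1) ↔ RB (f 0) (f 1) (f 2) (f 3) (f 4) (f 5) := by
  simp only [rels34', Set.mem_insert_iff, Set.mem_singleton_iff, forall_eq_or_imp, forall_eq, b,
    map_mul, map_inv, FreeGroup.lift_apply_of, mul_inv_eq_one]
  constructor
  · rintro ⟨h1, h2, h3, h4, h5, h6, c1, c2, c3, c4, c5, c6, c7, c8, c9, r⟩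
    exact ⟨h1, h2, h3, h4, h5, h6, c1, c2, c3, c4, c5, c6, c7, c8, c9, (rel6_iff h2 h4).1 r⟩
  · intro H
    exact ⟨H.st, H.tu, H.uv, H.tw, H.uw, H.xv, H.su, H.sv, H.sw, H.tv, H.vw, H.xs, H.xt, H.xu,
      H.xw, (rel6_iff H.tu H.tw).2 H.r6⟩

theorem lift_of_eq_one {rels : Set (FreeGroup (Fin 6))} :
    ∀ r ∈ rels, FreeGroup.lift (PresentedGroup.of (rels := rels)) r = 1 := by
  intro r hr
  have e : FreeGroup.lift (PresentedGroup.of (rels := rels)) = PresentedGroup.mk rels := by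
    ext i; simp [PresentedGroup.of]
  rw [e]
  exact PresentedGroup.one_of_mem hr

theorem B34_iso :
    ∃ e : PresentedGroup rels34' ≃* PresentedGroup rels34,
      e (PresentedGroup.of 0) = A 0 ∧
      e (PresentedGroup.of 1) = A 1 ∧
      e (PresentedGroup.of 2) = A 2 ∧
      e (PresentedGroup.of 3) = A 2 * A 3 * (A 2)⁻¹ ∧
      e (PresentedGroup.of 4) = (A 1 * A 0) * A 4 * (A 1 * A 0)⁻¹ ∧
      e (PresentedGroup.of 5) =
        (A 3 * A 1 * A 0 * A 4 * A 2) * A 5 * (A 3 * A 1 * A 0 * A 4 * A 2)⁻¹ := by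
  have HA := (lift_rels (PresentedGroup.of (rels := rels34))).1 lift_of_eq_one
  have HB := (lift_rels' (PresentedGroup.of (rels := rels34'))).1 lift_of_eq_one
  obtain ⟨B, hB⟩ : ∃ B : Fin 6 → PresentedGroup rels34', B = PresentedGroup.of := ⟨_, rfl⟩
  rw [← hB] at HB
  change RA (A 0) (A 1) (A 2) (A 3) (A 4) (A 5) at HA
  -- forward map
  let f : Fin 6 → PresentedGroup rels34 :=
    ![A 0, A 1, A 2, K (A 2) (A 3), K (A 1) (K (A 0) (A 4)),
      K (A 3 * A 1 * A 0 * A 4 * A 2) (A 5)]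
  have hf := (lift_rels' f).2 HA.toRB
  -- backward map
  obtain ⟨p, hp⟩ : ∃ p, p = K (B 2)⁻¹ (B 3) := ⟨_, rfl⟩
  obtain ⟨r, hr⟩ : ∃ r, r = K (B 0)⁻¹ (K (B 1)⁻¹ (B 4)) := ⟨_, rfl⟩
  obtain ⟨z, hz⟩ : ∃ z, z = K (p * B 1 * B 0 * r * B 2)⁻¹ (B 5) := ⟨_, rfl⟩
  have ep : K (B 2) p = B 3 := by rw [hp, K_K_inv]
  have er : K (B 1) (K (B 0) r) = B 4 := by rw [hr, K_K_inv, K_K_inv]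
  have ez : K (p * B 1 * B 0 * r * B 2) z = B 5 := by rw [hz, K_K_inv]
  rw [← ep, ← er, ← ez] at HB
  let g : Fin 6 → PresentedGroup rels34' := ![B 0, B 1, B 2, p, r, z]
  have hg := (lift_rels g).2 HB.toRA
  let F := PresentedGroup.toGroup hf
  let E := PresentedGroup.toGroup hg
  have F' : ∀ i, F (B i) = f i := fun i => by rw [hB]; exact PresentedGroup.toGroup.of hf
  have E' : ∀ i, E (A i) = g i := fun i => PresentedGroup.toGroup.of hg
  have mK : ∀ {G H : Type} [Group G] [Group H] (φ : G →* H) (x y : G),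
      φ (K x y) = K (φ x) (φ y) := by intros; simp [K]
  have Fp : F p = A 3 := by
    rw [hp, mK, map_inv, F', F']; exact K_inv_K (A 2) (A 3)
  have Fr : F r = A 4 := by
    rw [hr, mK, mK, map_inv, map_inv, F', F', F']
    change K (A 0)⁻¹ (K (A 1)⁻¹ (K (A 1) (K (A 0) (A 4)))) = _
    rw [K_inv_K, K_inv_K]
  have Fz : F z = A 5 := by
    rw [hz, mK, map_inv, map_mul, map_mul, map_mul, map_mul, Fp, Fr, F', F', F', F']
    exact K_inv_K _ _
  have EF : E.comp F = MonoidHom.id _ := by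
    apply PresentedGroup.ext
    intro i
    rw [← hB]
    change E (F (B i)) = B i
    rw [F']
    fin_cases i
    · exact E' 0
    · exact E' 1
    · exact E' 2
    · change E (K (A 2) (A 3)) = B 3
      rw [mK, E', E']; exact ep
    · change E (K (A 1) (K (A 0) (A 4))) = B 4
      rw [mK, mK, E', E', E']; exact er
    · change E (K (A 3 * A 1 * A 0 * A 4 * A 2) (A 5)) = B 5
      rw [mK, map_mul, map_mul, map_mul, map_mul, E', E', E', E', E', E']; exact ez
  have FE : F.comp E = MonoidHom.id _ := by
    apply PresentedGroup.ext
    intro i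
    change F (E (A i)) = A i
    rw [E']
    fin_cases i
    · exact F' 0
    · exact F' 1
    · exact F' 2
    · exact Fp
    · exact Fr
    · exact Fz
  refine ⟨MonoidHom.toMulEquiv F E EF FE, ?_⟩
  rw [← hB]
  refine ⟨F' 0, F' 1, F' 2, F' 3, ?_, F' 5⟩
  refine (F' 4).trans ?_
  change K (A 1) (K (A 0) (A 4)) = K (A 1 * A 0) (A 4)
  rw [K_mul]

end G34Presentation
end

section
/- Let B₂₉ be the group presented by generators a_1, a_2, a_3, a_4 and relations: braids a_1a_3a_1 = a_3a_1a_3, a_2a_3a_2 = a_3a_2a_3, a_2a_4a_2 = a_4a_2a_4; length-4 braids a_1a_2a_1a_2 = a_2a_1a_2a_1, a_1a_4a_1a_4 = a_4a_1a_4a_1, a_3a_4a_3a_4 = a_4a_3a_4a_3; and the cycle relations rel_4(a_4,a_2,a_1): a_4a_2a_1a_4 = a_2a_1a_4a_2, rel_4(a_3,a_1,a_4): a_3a_1a_4a_3 = a_1a_4a_3a_1, and rel_6(a_3,a_1,a_2): a_3a_1a_2a_3a_1a_2 = a_1a_2a_3a_1a_2a_3. Let B'₂₉ be the group presented by generators s,t,u,v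 and relations: braids sts = tst, tut = utu, uvu = vuv; length-4 braid tvtv = vtvt; commutations su = us, sv = vs; and rel_6(u,t,v): utvutv = tvutvu (the known presentation of the braid group of the unitary reflection group G₂₉). Then the assignment t ↦ a_1, v ↦ a_2, u ↦ a_3, s ↦ (a_2a_3a_1)⁻¹a_4(a_2a_3a_1) extends to a group isomorphism from B'₂₉ onto B₂₉. -/
/- The new presentation B₂₉ (on the diagram D₂₉) and the known presentation
   B'₂₉ of the braid group of the unitary reflection group G₂₉ are equivalent:
   t ↦ a₁, v ↦ a₂, u ↦ a₃, s ↦ (a₂a₃a₁)⁻¹a₄(a₂a₃a₁) extends to an isomorphism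
   B'₂₉ ≃ B₂₉.  Generators a₁,…,a₄ are indexed by 0,…,3, and s,t,u,v by
   0,1,2,3. -/

namespace G29Presentation

/-- `a i` is the free group generator corresponding to `a_{i+1}`. -/
def a (i : Fin 4) : FreeGroup (Fin 4) := FreeGroup.of i

/-- Relations of the presentation `B₂₉` on the diagram `D₂₉`. -/
def rels29 : Set (FreeGroup (Fin 4)) :=
  { a 0 * a 2 * a 0 * (a 2 * a 0 * a 2)⁻¹,
    a 1 * a 2 * a 1 * (a 2 * a 1 * a 2)⁻¹,
    a 1 * a 3 * a 1 * (a 3 * a 1 * a 3)⁻¹,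
    a 0 * a 1 * a 0 * a 1 * (a 1 * a 0 * a 1 * a 0)⁻¹,
    a 0 * a 3 * a 0 * a 3 * (a 3 * a 0 * a 3 * a 0)⁻¹,
    a 2 * a 3 * a 2 * a 3 * (a 3 * a 2 * a 3 * a 2)⁻¹,
    a 3 * a 1 * a 0 * a 3 * (a 1 * a 0 * a 3 * a 1)⁻¹,
    a 2 * a 0 * a 3 * a 2 * (a 0 * a 3 * a 2 * a 0)⁻¹,
    a 2 * a 0 * a 1 * a 2 * a 0 * a 1 * (a 0 * a 1 * a 2 * a 0 * a 1 * a 2)⁻¹ }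

/-- `b 0, b 1, b 2, b 3` are the free group generators `s, t, u, v`. -/
def b (i : Fin 4) : FreeGroup (Fin 4) := FreeGroup.of i

/-- Relations of the known presentation `B'₂₉` of `Braid(G₂₉)`. -/
def rels29' : Set (FreeGroup (Fin 4)) :=
  { b 0 * b 1 * b 0 * (b 1 * b 0 * b 1)⁻¹,
    b 1 * b 2 * b 1 * (b 2 * b 1 * b 2)⁻¹,
    b 2 * b 3 * b 2 * (b 3 * b 2 * b 3)⁻¹,
    b 1 * b 3 * b 1 * b 3 * (b 3 * b 1 * b 3 * b 1)⁻¹,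
    b 0 * b 2 * (b 2 * b 0)⁻¹,
    b 0 * b 3 * (b 3 * b 0)⁻¹,
    b 2 * b 1 * b 3 * b 2 * b 1 * b 3 * (b 1 * b 3 * b 2 * b 1 * b 3 * b 2)⁻¹ }

/-- `A i` is the image of `a i` in `B₂₉`. -/
def A (i : Fin 4) : PresentedGroup rels29 := PresentedGroup.of i

section helpers
variable {G : Type*} [Group G]

def Br (x y : G) : Prop := x * y * x = y * x * y

theorem Br.symm {x y : G} (h : Br x y) : Br y x := Eq.symm h

theorem Br.c1 {x y : G} (h : Br x y) : x * y * x⁻¹ = y⁻¹ * x * y := by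
  unfold Br at h
  calc x * y * x⁻¹ = y⁻¹ * (y * x * y) * x⁻¹ := by group
    _ = y⁻¹ * (x * y * x) * x⁻¹ := by rw [h]
    _ = _ := by group

theorem Br.conj {x y : G} (g : G) (h : Br x y) : Br (g * x * g⁻¹) (g * y * g⁻¹) := by
  unfold Br at *
  calc _ = g * (x * y * x) * g⁻¹ := by group
    _ = g * (y * x * y) * g⁻¹ := by rw [h]
    _ = _ := by group

theorem Br.of_conj {x y : G} (g : G) (h : Br (g * x * g⁻¹) (g * y * g⁻¹)) : Br x y := by
  have := Br.conj g⁻¹ h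
  convert this using 1 <;> group

theorem Commute.cj {x y : G} (g : G) (h : Commute x y) :
    Commute (g * x * g⁻¹) (g * y * g⁻¹) := by
  unfold Commute SemiconjBy at *
  calc _ = g * (x * y) * g⁻¹ := by group
    _ = g * (y * x) * g⁻¹ := by rw [h]
    _ = _ := by group

theorem cj_comm {x q : G} (h : Commute x q) : q * x * q⁻¹ = x := by
  rw [← h.eq]; group

theorem cj_comm' {x q : G} (h : Commute x q) : q⁻¹ * x * q = x := by
  rw [mul_assoc, h.eq]; group

/-- The rank three relations. -/
structure H3 (t u v : G) : Prop where
  tu : Br t u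
  uv : Br u v
  tv : t * v * t * v = v * t * v * t
  rel : u * t * v * u * t * v = t * v * u * t * v * u

variable {t u v : G}

theorem H3.q_eq (h : H3 t u v) : u * t * u⁻¹ = t⁻¹ * u * t := h.tu.symm.c1

theorem H3.K (h : H3 t u v) : v * t * v * u * t * v * u = t * v * u * t * v * u * t := by
  have tu := h.tu
  have uv := h.uv
  unfold Br at tu uv
  have : v * t * v * u * t * v * u * v = t * v * u * t * v * u * t * v := by
    calc v * t * v * u * t * v * u * v = v * t * v * u * t * (v * u * v) := by group
      _ = v * t * v * u * t * (u * v * u) := by rw [uv]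
      _ = v * t * v * (u * t * u) * v * u := by group
      _ = v * t * v * (t * u * t) * v * u := by rw [tu]
      _ = (v * t * v * t) * u * t * v * u := by group
      _ = (t * v * t * v) * u * t * v * u := by rw [h.tv]
      _ = t * v * (t * v * u * t * v * u) := by group
      _ = t * v * (u * t * v * u * t * v) := by rw [h.rel]
      _ = _ := by group
  exact mul_right_cancel this

theorem H3.E (h : H3 t u v) : v * u * t * v * u * t * v = u * t * v * u * t * v * t := by
  calc v * u * t * v * u * t * v = v * (u * t * v * u * t * v) := by group
    _ = v * (t * v * u * t * v * u) := by rw [h.rel]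
    _ = v * t * v * u * t * v * u := by group
    _ = (t * v * u * t * v * u) * t := by rw [h.K]
    _ = _ := by rw [← h.rel]

theorem H3.vq (h : H3 t u v) : Br v (t⁻¹ * u * t) := by
  rw [← h.q_eq]
  have huv : v * u * v⁻¹ = u⁻¹ * v * u := h.uv.symm.c1
  unfold Br
  calc v * (u * t * u⁻¹) * v = v * u * t * (u⁻¹ * v * u) * u⁻¹ := by group
    _ = v * u * t * (v * u * v⁻¹) * u⁻¹ := by rw [huv]
    _ = (v * u * t * v * u * t * v) * v⁻¹ * t⁻¹ * v⁻¹ * u⁻¹ := by group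
    _ = (u * t * v * u * t * v * t) * v⁻¹ * t⁻¹ * v⁻¹ * u⁻¹ := by rw [h.E]
    _ = u * t * v * u * v⁻¹ * (v * t * v * t) * v⁻¹ * t⁻¹ * v⁻¹ * u⁻¹ := by group
    _ = u * t * v * u * v⁻¹ * (t * v * t * v) * v⁻¹ * t⁻¹ * v⁻¹ * u⁻¹ := by rw [h.tv]
    _ = u * t * (v * u * v⁻¹) * t * u⁻¹ := by group
    _ = u * t * (u⁻¹ * v * u) * t * u⁻¹ := by rw [huv]
    _ = _ := by group

theorem H3.ru (h : H3 t u v) : Br (v⁻¹ * t * v) u := by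
  have huv : v * u * v⁻¹ = u⁻¹ * v * u := h.uv.symm.c1
  unfold Br
  symm
  calc u * (v⁻¹ * t * v) * u = v⁻¹ * (v * u * v⁻¹) * t * v * u := by group
    _ = v⁻¹ * (u⁻¹ * v * u) * t * v * u := by rw [huv]
    _ = v⁻¹ * u⁻¹ * t⁻¹ * (t * v * u * t * v * u) := by group
    _ = v⁻¹ * u⁻¹ * t⁻¹ * (u * t * v * u * t * v) := by rw [h.rel]
    _ = v⁻¹ * u⁻¹ * (t⁻¹ * u * t) * v * u * t * v := by group
    _ = v⁻¹ * u⁻¹ * (u * t * u⁻¹) * v * u * t * v := by rw [h.q_eq]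
    _ = v⁻¹ * t * (u⁻¹ * v * u) * t * v := by group
    _ = v⁻¹ * t * (v * u * v⁻¹) * t * v := by rw [huv]
    _ = _ := by group

theorem H3.p_eq (h : H3 t u v) : v * t * v⁻¹ = t⁻¹ * (v⁻¹ * t * v) * t := by
  calc v * t * v⁻¹ = t⁻¹ * v⁻¹ * (v * t * v * t) * v⁻¹ := by group
    _ = t⁻¹ * v⁻¹ * (t * v * t * v) * v⁻¹ := by rw [h.tv]
    _ = _ := by group

theorem H3.pq (h : H3 t u v) : Br (v * t * v⁻¹) (t⁻¹ * u * t) := by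
  rw [h.p_eq]
  simpa using h.ru.conj t⁻¹

theorem H3.gu (h : H3 t u v) : (v * u * t) * u * (v * u * t)⁻¹ = v * t * v⁻¹ := by
  calc (v * u * t) * u * (v * u * t)⁻¹ = v * (u * t * u) * t⁻¹ * u⁻¹ * v⁻¹ := by group
    _ = v * (t * u * t) * t⁻¹ * u⁻¹ * v⁻¹ := by rw [show u * t * u = t * u * t from h.tu.symm]
    _ = _ := by group

theorem H3.gt (h : H3 t u v) : (v * u * t) * t * (v * u * t)⁻¹ =
    (t⁻¹ * u * t)⁻¹ * v * (t⁻¹ * u * t) := by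
  rw [← h.vq.c1, ← h.q_eq]; group

theorem H3.gv (h : H3 t u v) : (v * u * t) * v * (v * u * t)⁻¹ =
    (t⁻¹ * u * t)⁻¹ * (v * t * v⁻¹) * (t⁻¹ * u * t) := by
  have huv : u * v * u⁻¹ = v⁻¹ * u * v := h.uv.c1
  have hvq := h.vq.c1
  have hq := h.q_eq
  have h3 : (t⁻¹ * u * t) * u * (t⁻¹ * u * t)⁻¹ = t := by
    rw [← hq]
    calc _ = u * (t * u * t⁻¹) * u⁻¹ := by group
      _ = u * (u⁻¹ * t * u) * u⁻¹ := by rw [h.tu.c1]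
      _ = _ := by group
  generalize hqq : t⁻¹ * u * t = q at *
  calc (v * u * t) * v * (v * u * t)⁻¹
      = v * (u * t * u⁻¹) * (u * v * u⁻¹) * (u * t * u⁻¹)⁻¹ * v⁻¹ := by group
    _ = v * q * (v⁻¹ * u * v) * q⁻¹ * v⁻¹ := by rw [hq, huv]
    _ = (v * q * v⁻¹) * u * (v * q * v⁻¹)⁻¹ := by group
    _ = (q⁻¹ * v * q) * u * (q⁻¹ * v * q)⁻¹ := by rw [hvq]
    _ = q⁻¹ * v * (q * u * q⁻¹) * v⁻¹ * q := by group
    _ = _ := by rw [h3]; group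

/-- forward direction -/
theorem fwd (h : H3 t u v) {x : G} (hxv : Br v x)
    (h1 : x * v * t * x = v * t * x * v) (h2 : u * t * x * u = t * x * u * t) :
    let s := (v * u * t)⁻¹ * x * (v * u * t)
    Br s t ∧ Commute s u ∧ Commute s v := by
  intro s
  have hx : (v * u * t) * s * (v * u * t)⁻¹ = x := by simp only [s]; group
  have hp : Commute x (v * t * v⁻¹) := by
    have e : v⁻¹ * x * v = x * v * x⁻¹ := hxv.symm.c1.symm
    change x * (v * t * v⁻¹) = v * t * v⁻¹ * x
    calc x * (v * t * v⁻¹) = (x * v * t * x) * (x⁻¹ * v⁻¹) := by group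
      _ = v * t * v⁻¹ * (v * x * v) * x⁻¹ * v⁻¹ := by rw [h1]; group
      _ = v * t * v⁻¹ * (x * v * x) * x⁻¹ * v⁻¹ := by
        rw [show v * x * v = x * v * x from hxv]
      _ = _ := by group
  have hq : Commute x (t⁻¹ * u * t) := by
    rw [← h.q_eq]
    change x * (u * t * u⁻¹) = u * t * u⁻¹ * x
    calc x * (u * t * u⁻¹) = t⁻¹ * (t * x * u * t) * u⁻¹ := by group
      _ = (t⁻¹ * u * t) * x := by rw [← h2]; group
      _ = _ := by rw [h.q_eq]
  refine ⟨?_, ?_, ?_⟩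
  · apply Br.of_conj (v * u * t)
    rw [hx, h.gt]
    have := hxv.symm.conj (t⁻¹ * u * t)⁻¹
    rwa [inv_inv, cj_comm' hq] at this
  · have : Commute ((v * u * t) * s * (v * u * t)⁻¹) ((v * u * t) * u * (v * u * t)⁻¹) := by
      rw [hx, h.gu]; exact hp
    have := Commute.cj (v * u * t)⁻¹ this
    convert this using 1 <;> group
  · have : Commute ((v * u * t) * s * (v * u * t)⁻¹) ((v * u * t) * v * (v * u * t)⁻¹) := by
      rw [hx, h.gv]; exact (hq.inv_right.mul_right hp).mul_right hq
    have := Commute.cj (v * u * t)⁻¹ this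
    convert this using 1 <;> group

/-- backward direction -/
theorem bwd (h : H3 t u v) {s : G} (hst : Br s t) (hsu : Commute s u) (hsv : Commute s v) :
    let x := (v * u * t) * s * (v * u * t)⁻¹
    Br v x ∧ t * x * t * x = x * t * x * t ∧ u * x * u * x = x * u * x * u ∧
    x * v * t * x = v * t * x * v ∧ u * t * x * u = t * x * u * t := by
  intro x
  have hp : Commute x (v * t * v⁻¹) := by
    rw [← h.gu]; exact Commute.cj _ hsu
  have hq : Commute x (t⁻¹ * u * t) := by
    have h1 : Commute x ((t⁻¹ * u * t)⁻¹ * (v * t * v⁻¹) * (t⁻¹ * u * t)) := by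
      rw [← h.gv]; exact Commute.cj _ hsv
    rw [← h.pq.c1] at h1
    have := (hp.inv_right.mul_right h1).mul_right hp
    have e : ∀ p q : G, p⁻¹ * (p * q * p⁻¹) * p = q := fun p q => by group
    rwa [e] at this
  have hxv : Br x v := by
    have h1 : Br x ((t⁻¹ * u * t)⁻¹ * v * (t⁻¹ * u * t)) := by
      rw [← h.gt]; exact hst.conj _
    have h2 := h1.conj (t⁻¹ * u * t)
    rw [cj_comm hq] at h2
    convert h2 using 1
    group
  have h4 : t * x * t * x = x * t * x * t := by
    have hxv' : v * x * v⁻¹ = x⁻¹ * v * x := hxv.symm.c1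
    have hxv2 : x * v⁻¹ * x⁻¹ = v⁻¹ * x⁻¹ * v := by
      have := congrArg (·⁻¹) hxv.c1
      simpa [mul_assoc] using this
    have D : (v * t * v⁻¹) * v * (v * t * v⁻¹) * v = v * (v * t * v⁻¹) * v * (v * t * v⁻¹) := by
      calc _ = v * (t * v * t * v) * v⁻¹ := by group
        _ = v * (v * t * v * t) * v⁻¹ := by rw [h.tv]
        _ = _ := by group
    have ht : t = v⁻¹ * (v * t * v⁻¹) * v := by group
    generalize v * t * v⁻¹ = p at *
    have hp2 : p * x⁻¹ = x⁻¹ * p := hp.inv_left.eq.symm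
    have e1 : t * x * t * x = v⁻¹ * x⁻¹ * (p * v * p * v) * x * v := by
      calc t * x * t * x = v⁻¹ * p * (v * x * v⁻¹) * p * v * x := by rw [ht]; group
        _ = v⁻¹ * (p * x⁻¹) * v * (x * p) * v * x := by rw [hxv']; group
        _ = v⁻¹ * x⁻¹ * p * v * p * (x * v * x) := by rw [hp2, hp.eq]; group
        _ = v⁻¹ * x⁻¹ * p * v * p * (v * x * v) := by rw [show x * v * x = v * x * v from hxv]
        _ = _ := by group
    have e2 : x * t * x * t = v⁻¹ * x⁻¹ * (v * p * v * p) * x * v := by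
      calc x * t * x * t = x * v⁻¹ * p * (v * x * v⁻¹) * p * v := by rw [ht]; group
        _ = x * v⁻¹ * (p * x⁻¹) * v * (x * p) * v := by rw [hxv']; group
        _ = (x * v⁻¹ * x⁻¹) * p * v * p * x * v := by rw [hp2, hp.eq]; group
        _ = _ := by rw [hxv2]; group
    rw [e1, e2, D]
  have hu : u = (t⁻¹ * u * t)⁻¹ * t * (t⁻¹ * u * t) := by
    rw [← h.q_eq]
    calc u = u * t⁻¹ * u⁻¹ * (u * t * u) * u⁻¹ := by group
      _ = u * t⁻¹ * u⁻¹ * (t * u * t) * u⁻¹ := by rw [show t * u * t = u * t * u from h.tu]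
      _ = _ := by group
  refine ⟨hxv.symm, h4, ?_, ?_, ?_⟩
  · have hx := cj_comm' hq
    generalize t⁻¹ * u * t = q at *
    have hxq : x = q⁻¹ * x * q := hx.symm
    calc u * x * u * x = (q⁻¹ * t * q) * (q⁻¹ * x * q) * (q⁻¹ * t * q) * (q⁻¹ * x * q) := by
          rw [← hu, hx]
      _ = q⁻¹ * (t * x * t * x) * q := by group
      _ = q⁻¹ * (x * t * x * t) * q := by rw [h4]
      _ = (q⁻¹ * x * q) * (q⁻¹ * t * q) * (q⁻¹ * x * q) * (q⁻¹ * t * q) := by group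
      _ = _ := by rw [← hu, hx]
  · calc x * v * t * x = (x * (v * t * v⁻¹)) * v * x := by group
      _ = v * t * v⁻¹ * (x * v * x) := by rw [hp.eq]; group
      _ = v * t * v⁻¹ * (v * x * v) := by rw [show x * v * x = v * x * v from hxv]
      _ = _ := by group
  · calc u * t * x * u = t * ((t⁻¹ * u * t) * x) * u := by group
      _ = t * (x * (t⁻¹ * u * t)) * u := by rw [hq.eq]
      _ = t * (x * (u * t * u⁻¹)) * u := by rw [h.q_eq]
      _ = _ := by group

end helpers

/-- `B i` is the image of `b i`. -/
def B (i : Fin 4) : PresentedGroup rels29' := PresentedGroup.of i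

theorem relA {x y : FreeGroup (Fin 4)} (h : x * y⁻¹ ∈ rels29) :
    PresentedGroup.mk rels29 x = PresentedGroup.mk rels29 y := by
  have := PresentedGroup.one_of_mem h
  rwa [map_mul, map_inv, mul_inv_eq_one] at this

theorem relB {x y : FreeGroup (Fin 4)} (h : x * y⁻¹ ∈ rels29') :
    PresentedGroup.mk rels29' x = PresentedGroup.mk rels29' y := by
  have := PresentedGroup.one_of_mem h
  rwa [map_mul, map_inv, mul_inv_eq_one] at this

theorem H3A : H3 (A 0) (A 2) (A 1) where
  tu := relA (x := a 0 * a 2 * a 0) (y := a 2 * a 0 * a 2) (by simp [rels29])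
  uv := (relA (x := a 1 * a 2 * a 1) (y := a 2 * a 1 * a 2) (by simp [rels29])).symm
  tv := relA (x := a 0 * a 1 * a 0 * a 1) (y := a 1 * a 0 * a 1 * a 0) (by simp [rels29])
  rel := relA (x := a 2 * a 0 * a 1 * a 2 * a 0 * a 1) (y := a 0 * a 1 * a 2 * a 0 * a 1 * a 2)
    (by simp [rels29])

theorem H3B : H3 (B 1) (B 2) (B 3) where
  tu := relB (x := b 1 * b 2 * b 1) (y := b 2 * b 1 * b 2) (by simp [rels29'])
  uv := relB (x := b 2 * b 3 * b 2) (y := b 3 * b 2 * b 3) (by simp [rels29'])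
  tv := relB (x := b 1 * b 3 * b 1 * b 3) (y := b 3 * b 1 * b 3 * b 1) (by simp [rels29'])
  rel := relB (x := b 2 * b 1 * b 3 * b 2 * b 1 * b 3) (y := b 1 * b 3 * b 2 * b 1 * b 3 * b 2)
    (by simp [rels29'])

theorem fwdA :
    Br ((A 1 * A 2 * A 0)⁻¹ * A 3 * (A 1 * A 2 * A 0)) (A 0) ∧
    Commute ((A 1 * A 2 * A 0)⁻¹ * A 3 * (A 1 * A 2 * A 0)) (A 2) ∧
    Commute ((A 1 * A 2 * A 0)⁻¹ * A 3 * (A 1 * A 2 * A 0)) (A 1) := fwd H3A (x := A 3)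
  (relA (x := a 1 * a 3 * a 1) (y := a 3 * a 1 * a 3) (by simp [rels29]))
  (relA (x := a 3 * a 1 * a 0 * a 3) (y := a 1 * a 0 * a 3 * a 1) (by simp [rels29]))
  (relA (x := a 2 * a 0 * a 3 * a 2) (y := a 0 * a 3 * a 2 * a 0) (by simp [rels29]))

theorem bwdB : ∃ x, x = (B 3 * B 2 * B 1) * B 0 * (B 3 * B 2 * B 1)⁻¹ ∧
    Br (B 3) x ∧ B 1 * x * B 1 * x = x * B 1 * x * B 1 ∧
    B 2 * x * B 2 * x = x * B 2 * x * B 2 ∧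
    x * B 3 * B 1 * x = B 3 * B 1 * x * B 3 ∧ B 2 * B 1 * x * B 2 = B 1 * x * B 2 * B 1 :=
  ⟨_, rfl, bwd H3B (s := B 0)
  (relB (x := b 0 * b 1 * b 0) (y := b 1 * b 0 * b 1) (by simp [rels29']))
  (relB (x := b 0 * b 2) (y := b 2 * b 0) (by simp [rels29']))
  (relB (x := b 0 * b 3) (y := b 3 * b 0) (by simp [rels29']))⟩

/-- Images of `s, t, u, v`. -/
def fF : Fin 4 → PresentedGroup rels29 :=
  ![(A 1 * A 2 * A 0)⁻¹ * A 3 * (A 1 * A 2 * A 0), A 0, A 2, A 1]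

/-- Images of the `a i`. -/
def fB : Fin 4 → PresentedGroup rels29' :=
  ![B 1, B 3, B 2, (B 3 * B 2 * B 1) * B 0 * (B 3 * B 2 * B 1)⁻¹]

theorem fF_rel : ∀ r ∈ rels29', FreeGroup.lift fF r = 1 := by
  obtain ⟨h1, h2, h3⟩ := fwdA
  have h := H3A
  intro r hr
  simp only [rels29', Set.mem_insert_iff, Set.mem_singleton_iff] at hr
  rcases hr with rfl | rfl | rfl | rfl | rfl | rfl | rfl <;>
    rw [map_mul, map_inv, mul_inv_eq_one] <;> simp only [map_mul, b, FreeGroup.lift_apply_of]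
  · exact h1
  · exact h.tu
  · exact h.uv
  · exact h.tv
  · exact h2
  · exact h3
  · exact h.rel

theorem fB_rel : ∀ r ∈ rels29, FreeGroup.lift fB r = 1 := by
  obtain ⟨x, rfl, h1, h2, h3, h4, h5⟩ := bwdB
  have h := H3B
  intro r hr
  simp only [rels29, Set.mem_insert_iff, Set.mem_singleton_iff] at hr
  rcases hr with rfl | rfl | rfl | rfl | rfl | rfl | rfl | rfl | rfl <;>
    rw [map_mul, map_inv, mul_inv_eq_one] <;> simp only [map_mul, a, FreeGroup.lift_apply_of]
  · exact h.tu
  · exact h.uv.symm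
  · exact h1
  · exact h.tv
  · exact h2
  · exact h3
  · exact h4
  · exact h5
  · exact h.rel

theorem B29_iso :
    ∃ e : PresentedGroup rels29' ≃* PresentedGroup rels29,
      e (PresentedGroup.of 0) =
        (A 1 * A 2 * A 0)⁻¹ * A 3 * (A 1 * A 2 * A 0) ∧
      e (PresentedGroup.of 1) = A 0 ∧
      e (PresentedGroup.of 2) = A 2 ∧
      e (PresentedGroup.of 3) = A 1 := by
  let F := PresentedGroup.toGroup fF_rel
  let E := PresentedGroup.toGroup fB_rel
  have F0 : F (B 0) = (A 1 * A 2 * A 0)⁻¹ * A 3 * (A 1 * A 2 * A 0) :=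
    PresentedGroup.toGroup.of fF_rel
  have F1 : F (B 1) = A 0 := PresentedGroup.toGroup.of fF_rel
  have F2 : F (B 2) = A 2 := PresentedGroup.toGroup.of fF_rel
  have F3 : F (B 3) = A 1 := PresentedGroup.toGroup.of fF_rel
  have E0 : E (A 0) = B 1 := PresentedGroup.toGroup.of fB_rel
  have E1 : E (A 1) = B 3 := PresentedGroup.toGroup.of fB_rel
  have E2 : E (A 2) = B 2 := PresentedGroup.toGroup.of fB_rel
  have E3 : E (A 3) = (B 3 * B 2 * B 1) * B 0 * (B 3 * B 2 * B 1)⁻¹ :=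
    PresentedGroup.toGroup.of fB_rel
  have EF : E.comp F = MonoidHom.id _ := by
    apply PresentedGroup.ext
    intro i
    change E (F (B i)) = B i
    fin_cases i
    · change E (F (B 0)) = B 0
      rw [F0]; simp only [map_mul, map_inv, E0, E1, E2, E3]; group
    · change E (F (B 1)) = B 1
      rw [F1, E0]
    · change E (F (B 2)) = B 2
      rw [F2, E2]
    · change E (F (B 3)) = B 3
      rw [F3, E1]
  have FE : F.comp E = MonoidHom.id _ := by
    apply PresentedGroup.ext
    intro i
    change F (E (A i)) = A i
    fin_cases i
    · change F (E (A 0)) = A 0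
      rw [E0, F1]
    · change F (E (A 1)) = A 1
      rw [E1, F3]
    · change F (E (A 2)) = A 2
      rw [E2, F2]
    · change F (E (A 3)) = A 3
      rw [E3]; simp only [map_mul, map_inv, F0, F1, F2, F3]; group
  exact ⟨MonoidHom.toMulEquiv F E EF FE, F0, F1, F2, F3⟩

end G29Presentation
end
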